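/- Let X be a finite non-degenerate indecomposable cycle set with |X| > 1. Then X has finite primitive level if and only if the displacement group Dis(X) does not act transitively on X. -/

import Mathlib

/-!
The proof rests on one fact: in a finite primitive non-degenerate cycle set `Y` with more than one
element, all left multiplications coincide (`CycleSet.Primitive.sigma_eq`).

Given this, if `X` has finite primitive level, then composing the maps of a chain gives an
epimorphism from `X` to such a `Y`. Every `σ_x σ_y⁻¹` preserves its fibres, so `Dis(X)` is
intransitive. Conversely, `G(X)` is generated by its normal subgroup `Dis(X)` and any single
`σ_{x₀}`, so the `Dis(X)`-orbits are permuted cyclically, all `σ_x` inducing the same cycle. If there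
is more than one orbit, then their number has a prime divisor `p`, and `X` maps onto the primitive
cycle set `x·y = y + 1` on `ℤ/p`.

For the fact on primitive cycle sets, the permutation group `G = G(Y)` carries the structure of a
left brace. Here its additive group `A` is realised as the abelian regular group of permutations of
`G` generated by the maps `g ↦ σ_{g x} g`, on which `G` acts by conjugation, and the brace structure
is recorded as a bijective 1-cocycle `G → A`. The preimages of the torsion subgroups of `A` are Hall
subgroups, so `G` is solvable by the theorems of Hall, Wielandt and Burnside
(`isSolvable_of_cocycle`). The key lemma `const_of_primitive` then concludes: a nontrivial
normal `p`-subgroup of the primitive solvable group `G` is transitive, an averaging argument shows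
that it acts trivially on the `p'`-part of `A`, and counting in the `p`-part shows that the
generators of `A` attached to the points of `Y` are all equal.

Burnside's theorem on simple groups with a conjugacy class of prime power size is proved from the
Wedderburn decomposition of the complex group algebra.
-/

/-- A cycle set: each left multiplication `σ_x = op x` is bijective and
`(x·y)·(x·z) = (y·x)·(y·z)`. -/
structure CycleSet (X : Type) where
  op : X → X → X
  bij : ∀ x, Function.Bijective (op x)
  cyc : ∀ x y z, op (op x y) (op x z) = op (op y x) (op y z)

namespace CycleSet

variable {X Y : Type}

/-- The left multiplication `σ_x` as a permutation of `X`. -/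
noncomputable def sigma (C : CycleSet X) (x : X) : Equiv.Perm X :=
  Equiv.ofBijective _ (C.bij x)

/-- Non-degeneracy: the squaring map `x ↦ x·x` is bijective. -/
def Nondeg (C : CycleSet X) : Prop := Function.Bijective fun x => C.op x x

/-- The associated permutation group `G(X)`, generated by the `σ_x`. -/
noncomputable def G (C : CycleSet X) : Subgroup (Equiv.Perm X) :=
  Subgroup.closure (Set.range C.sigma)

/-- The displacement group `Dis(X)`, generated by the `σ_x σ_y⁻¹`. -/
noncomputable def Dis (C : CycleSet X) : Subgroup (Equiv.Perm X) :=
  Subgroup.closure {g | ∃ x y, g = C.sigma x * (C.sigma y)⁻¹}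

/-- A subgroup of `Sym(X)` acts transitively on `X`. -/
def SubgroupTransitive (H : Subgroup (Equiv.Perm X)) : Prop :=
  ∀ a b : X, ∃ g ∈ H, g a = b

/-- Indecomposability: `G(X)` acts transitively on `X`. -/
def Indec (C : CycleSet X) : Prop := SubgroupTransitive C.G

/-- A trivial cycle set: all left multiplications coincide. -/
def IsTrivial (C : CycleSet X) : Prop := ∀ x y z, C.op x z = C.op y z

/-- Cycle set homomorphism. -/
def IsHom (C : CycleSet X) (D : CycleSet Y) (f : X → Y) : Prop :=
  ∀ a b : X, f (C.op a b) = D.op (f a) (f b)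

/-- A block for the action of `G(X)` on `X`. -/
def IsBlock (C : CycleSet X) (s : Set X) : Prop :=
  ∀ g ∈ C.G, (⇑g '' s = s ∨ Disjoint (⇑g '' s) s)

/-- Primitivity: `G(X)` acts transitively on `X` and all blocks are trivial. -/
def Primitive (C : CycleSet X) : Prop :=
  C.Indec ∧ ∀ s : Set X, C.IsBlock s → s.Subsingleton ∨ s = Set.univ

/-- There is a chain `X = X₁ → X₂ → ⋯ → X_k` of epimorphisms of cycle sets with
`|X_i| > |X_{i+1}| > 1` for `1 ≤ i ≤ k-1` and with `X_k` primitive. -/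
def HasChain [Finite X] (C : CycleSet X) (k : ℕ) : Prop :=
  ∃ (T : ℕ → Type) (_ : ∀ i, Finite (T i)) (CS : ∀ i, CycleSet (T i)) (e : X → T 0),
    Function.Bijective e ∧ IsHom C (CS 0) e ∧
    (∀ i, i + 1 < k → Nat.card (T (i + 1)) < Nat.card (T i) ∧ 1 < Nat.card (T (i + 1))) ∧
    (∀ i, i + 1 < k → ∃ p : T i → T (i + 1),
      Function.Surjective p ∧ IsHom (CS i) (CS (i + 1)) p) ∧
    (CS (k - 1)).Primitive

/-- `X` has finite primitive level: some chain as above exists (of positive length). -/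
def HasFPL [Finite X] (C : CycleSet X) : Prop := ∃ k, 1 ≤ k ∧ HasChain C k

/-- `fpl(X) = k`: `k` is the largest positive integer admitting a chain as above. -/
def fplEq [Finite X] (C : CycleSet X) (k : ℕ) : Prop :=
  1 ≤ k ∧ HasChain C k ∧ ∀ m, 1 ≤ m → HasChain C m → m ≤ k

end CycleSet

universe u

/-! ### Conjugacy classes of prime power size in simple groups -/

theorem trace_mulLeft_pi_matrix {n : ℕ} {d : Fin n → ℕ}
    (x : (i : Fin n) → Matrix (Fin (d i)) (Fin (d i)) ℂ) :
    LinearMap.trace ℂ _ (LinearMap.mulLeft ℂ x) = ∑ i, (d i : ℂ) * (x i).trace := by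
  classical
  rw [LinearMap.trace_eq_matrix_trace ℂ
    (Pi.basis fun i => Matrix.stdBasis ℂ (Fin (d i)) (Fin (d i)))]
  rw [Matrix.trace, Fintype.sum_sigma]
  refine Finset.sum_congr rfl fun i _ => ?_
  rw [Fintype.sum_prod_type, Matrix.trace, Finset.mul_sum]
  refine Finset.sum_congr rfl fun a _ => ?_
  have : ∀ b : Fin (d i), (LinearMap.toMatrix
      (Pi.basis fun i => Matrix.stdBasis ℂ (Fin (d i)) (Fin (d i)))
      (Pi.basis fun i => Matrix.stdBasis ℂ (Fin (d i)) (Fin (d i)))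
      (LinearMap.mulLeft ℂ x)).diag ⟨i, (a, b)⟩ = (x i).diag a := by
    intro b
    rw [Matrix.diag_apply, LinearMap.toMatrix_apply]
    simp only [Pi.basis_apply, LinearMap.mulLeft_apply, Matrix.stdBasis_eq_single, Matrix.diag_apply]
    change (Matrix.stdBasis ℂ (Fin (d i)) (Fin (d i))).repr
      ((x * (Pi.single i (Matrix.single a b 1) :
        (i : Fin n) → Matrix (Fin (d i)) (Fin (d i)) ℂ)) i) (a, b) = _
    rw [Pi.mul_apply, Pi.single_eq_same]
    change (x i * Matrix.single a b 1 : Matrix (Fin (d i)) (Fin (d i)) ℂ) a b = _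
    simp
  rw [Finset.sum_congr rfl fun b _ => this b]
  simp

theorem trace_mulLeft_single {G : Type*} [Group G] [Finite G] {g : G} (hg : g ≠ 1) :
    LinearMap.trace ℂ _ (LinearMap.mulLeft ℂ (MonoidAlgebra.single g (1 : ℂ))) = 0 := by
  classical
  cases nonempty_fintype G
  rw [LinearMap.trace_eq_matrix_trace ℂ (MonoidAlgebra.basis G ℂ)]
  refine Finset.sum_eq_zero fun h _ => ?_
  rw [Matrix.diag_apply, LinearMap.toMatrix_apply, MonoidAlgebra.basis_apply,
    LinearMap.mulLeft_apply, MonoidAlgebra.single_mul_single]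
  change (MonoidAlgebra.single (g * h) ((1 : ℂ) * 1)).coeff h = 0
  rw [MonoidAlgebra.coeff_single, Finsupp.single_apply, if_neg]
  simpa using hg

/-- The regular character `∑ d χ(g)` vanishes at `g ≠ 1`, expressed through a Wedderburn
decomposition of the group algebra. -/
theorem regular_trace {G : Type*} [Group G] [Finite G] {n : ℕ} {d : Fin n → ℕ}
    (e : MonoidAlgebra ℂ G ≃ₐ[ℂ] ((i : Fin n) → Matrix (Fin (d i)) (Fin (d i)) ℂ))
    {g : G} (hg : g ≠ 1) :
    ∑ i, (d i : ℂ) * (e (MonoidAlgebra.single g 1) i).trace = 0 := by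
  rw [← trace_mulLeft_pi_matrix, ← trace_mulLeft_single hg,
    ← LinearMap.trace_conj' (LinearMap.mulLeft ℂ (MonoidAlgebra.single g (1 : ℂ))) e.toLinearEquiv]
  congr 1
  refine LinearMap.ext fun y => ?_
  simp [LinearEquiv.conj_apply]

/-- The statement of `sum_roots_of_unity`, given a number field `K` containing the `n`-th roots of
unity. All conjugates of the mean have absolute value at most one, so by Kronecker's theorem a
nonzero mean is a root of unity, and equality holds in the triangle inequality. -/
theorem sum_roots_of_unity_aux {n : ℕ} {K : Type} [Field K] [NumberField K] {ζ : K}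
    (hζ : IsPrimitiveRoot ζ n) (hn : 0 < n) (s : Multiset ℂ) (hs : ∀ z ∈ s, z ^ n = 1)
    (h0 : s ≠ 0) (hint : IsIntegral ℤ (s.sum / s.card)) :
    s.sum = 0 ∨ ∃ u : ℂ, ∀ z ∈ s, z = u := by
  classical
  have : NeZero n := ⟨hn.ne'⟩
  by_cases hz : s.sum = 0
  · exact Or.inl hz
  right
  let φ : K →+* ℂ := Classical.choice (inferInstance : Nonempty (K →+* ℂ))
  have hprim : IsPrimitiveRoot (φ (ζ)) n :=
    hζ.map_of_injective φ.injective
  have hlift : ∀ z ∈ s, ∃ y : K, y ^ n = 1 ∧ φ y = z := by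
    intro z hzs
    obtain ⟨i, -, hi⟩ := hprim.eq_pow_of_pow_eq_one (hs z hzs)
    refine ⟨ζ ^ i, ?_, by simpa using hi⟩
    rw [← pow_mul, mul_comm, pow_mul, hζ.pow_eq_one, one_pow]
  choose! f hf1 hf2 using hlift
  have hcard : 0 < s.card := Multiset.card_pos.2 h0
  have hcard' : (0 : ℝ) < s.card := by exact_mod_cast hcard
  set x : K := (s.map f).sum / s.card with hx
  have hφx : φ x = s.sum / s.card := by
    rw [hx, map_div₀, map_natCast, map_multiset_sum, Multiset.map_map]
    congr 2
    conv_rhs => rw [← Multiset.map_id s]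
    exact Multiset.map_congr rfl fun z hz => hf2 z hz
  have hx0 : x ≠ 0 := by
    intro h
    rw [h, map_zero] at hφx
    have : (s.card : ℂ) ≠ 0 := by exact_mod_cast hcard.ne'
    exact hz ((div_eq_zero_iff.1 hφx.symm).resolve_right this)
  have hxi : IsIntegral ℤ x := by
    rw [← isIntegral_algHom_iff φ.toIntAlgHom φ.injective]
    simpa [hφx] using hint
  have hnorm : ∀ ψ : K →+* ℂ, ‖ψ x‖ ≤ 1 := by
    intro ψ
    rw [hx, map_div₀, map_natCast, map_multiset_sum, Multiset.map_map, norm_div,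
      Complex.norm_natCast, div_le_one hcard']
    refine (norm_multiset_sum_le _).trans ?_
    rw [Multiset.map_map]
    have : Multiset.map ((fun x => ‖x‖) ∘ (ψ ∘ f)) s = Multiset.map (fun _ => (1 : ℝ)) s := by
      refine Multiset.map_congr rfl fun z hz => ?_
      have h1 : (ψ (f z)) ^ n = 1 := by rw [← map_pow, hf1 z hz, map_one]
      exact Complex.norm_eq_one_of_pow_eq_one h1 hn.ne'
    have := congrArg Multiset.sum this
    simp only [Multiset.map_const', Multiset.sum_replicate, nsmul_eq_mul, mul_one] at this
    exact this.le
  obtain ⟨m, hm, hxm⟩ := NumberField.Embeddings.pow_eq_one_of_norm_le_one K ℂ hx0 hxi hnorm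
  have hu : ‖s.sum / (s.card : ℂ)‖ = 1 := by
    rw [← hφx]
    exact Complex.norm_eq_one_of_pow_eq_one (by rw [← map_pow, hxm, map_one]) hm.ne'
  set u : ℂ := s.sum / s.card with hu_def
  refine ⟨u, ?_⟩
  have hc0 : (s.card : ℂ) ≠ 0 := by exact_mod_cast hcard.ne'
  have huu : (starRingEnd ℂ) u * u = 1 := by
    rw [mul_comm, Complex.mul_conj, Complex.normSq_eq_norm_sq, hu]; simp
  have hsum : (s.map fun z => ((starRingEnd ℂ) u * z).re).sum = s.card := by
    have h1 : (s.map fun z => ((starRingEnd ℂ) u * z)).sum = s.card := by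
      rw [Multiset.sum_map_mul_left, Multiset.map_id',
        show s.sum = u * s.card by rw [hu_def]; field_simp, ← mul_assoc, huu, one_mul]
    have h2 := congrArg Complex.reAddGroupHom h1
    rw [map_multiset_sum, Multiset.map_map] at h2
    simpa using h2
  have hnz : ∀ z ∈ s, ‖(starRingEnd ℂ) u * z‖ = 1 := by
    intro z hz
    rw [norm_mul, Complex.norm_conj, hu, one_mul]
    exact Complex.norm_eq_one_of_pow_eq_one (hs z hz) hn.ne'
  have hle : ∀ z ∈ s, ((starRingEnd ℂ) u * z).re ≤ 1 := fun z hz =>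
    (Complex.re_le_norm _).trans (hnz z hz).le
  intro z hz
  have hre : ((starRingEnd ℂ) u * z).re = 1 := by
    by_contra hne
    have := Multiset.sum_lt_sum (s := s) (g := fun _ => (1 : ℝ)) hle
      ⟨z, hz, lt_of_le_of_ne (hle z hz) hne⟩
    rw [hsum] at this
    simp at this
  have him : ((starRingEnd ℂ) u * z).im = 0 := by
    have h1 := hnz z hz
    have h2 := Complex.sq_norm ((starRingEnd ℂ) u * z)
    rw [h1, Complex.normSq_apply, hre] at h2
    nlinarith
  have h1 : (starRingEnd ℂ) u * z = 1 := Complex.ext (by simpa using hre) (by simpa using him)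
  calc z = ((starRingEnd ℂ) u * u) * z := by rw [huu, one_mul]
    _ = u * ((starRingEnd ℂ) u * z) := by ring
    _ = u := by rw [h1, mul_one]

/-- If the mean of finitely many roots of unity is an algebraic integer, then it is zero or the
roots of unity are all equal. -/
theorem sum_roots_of_unity {n : ℕ} (hn : 0 < n) (s : Multiset ℂ) (hs : ∀ z ∈ s, z ^ n = 1)
    (h0 : s ≠ 0) (hint : IsIntegral ℤ (s.sum / s.card)) :
    s.sum = 0 ∨ ∃ u : ℂ, ∀ z ∈ s, z = u := by
  have : NeZero n := ⟨hn.ne'⟩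
  have hext := CyclotomicField.isCyclotomicExtension n ℚ
  obtain ⟨ζ, hζ⟩ := hext.exists_isPrimitiveRoot (Set.mem_singleton n) hn.ne'
  exact sum_roots_of_unity_aux hζ hn s hs h0 hint

theorem charpoly_root_pow {d k : ℕ} {M : Matrix (Fin d) (Fin d) ℂ} (hM : M ^ k = 1) :
    ∀ z ∈ M.charpoly.roots, z ^ k = 1 := by
  intro z hz
  have hr := (Polynomial.mem_roots (Matrix.charpoly_monic M).ne_zero).1 hz
  have h1 := spectrum.pow_mem_pow M k (Matrix.mem_spectrum_iff_isRoot_charpoly.2 hr)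
  rw [hM] at h1
  rcases Nat.eq_zero_or_pos d with rfl | hd
  · have := spectrum.of_subsingleton (R := ℂ) (1 : Matrix (Fin 0) (Fin 0) ℂ)
    rw [this] at h1; exact h1.elim
  · have : NeZero d := ⟨hd.ne'⟩
    rw [spectrum.one_eq] at h1; exact h1

theorem scalar_of_roots_eq {d k : ℕ} [NeZero d] (hk : 0 < k) {M : Matrix (Fin d) (Fin d) ℂ}
    (hM : M ^ k = 1) {u : ℂ} (hu : ∀ z ∈ M.charpoly.roots, z = u) :
    M = Matrix.scalar (Fin d) u := by
  have hdeg : M.charpoly.natDegree = d := by rw [Matrix.charpoly_natDegree_eq_dim, Fintype.card_fin]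
  have hsplit := IsAlgClosed.splits M.charpoly
  have h1 : M.charpoly = (Polynomial.X - Polynomial.C u) ^ d := by
    have hcard := hsplit.natDegree_eq_card_roots
    rw [hdeg] at hcard
    have hrep : M.charpoly.roots = Multiset.replicate d u :=
      Multiset.eq_replicate.2 ⟨hcard.symm, hu⟩
    have := hsplit.eq_prod_roots_of_monic (Matrix.charpoly_monic M)
    rw [this, hrep]; simp
  have h2 : minpoly ℂ M ∣ (Polynomial.X - Polynomial.C u) ^ d := by
    rw [← h1]; exact minpoly.dvd _ _ (Matrix.aeval_self_charpoly M)
  have h3 : Squarefree (minpoly ℂ M) := by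
    have hsep : (Polynomial.X ^ k - Polynomial.C (1 : ℂ)).Separable :=
      Polynomial.separable_X_pow_sub_C 1 (by exact_mod_cast hk.ne') one_ne_zero
    refine hsep.squarefree.squarefree_of_dvd (minpoly.dvd _ _ ?_)
    simp [hM]
  have h4 := (h3.dvd_pow_iff_dvd (NeZero.ne d)).1 h2
  obtain ⟨q, hq⟩ := h4
  have h5 : Polynomial.aeval M (Polynomial.X - Polynomial.C u) = 0 := by
    rw [hq, map_mul, minpoly.aeval, zero_mul]
  have h6 : M - algebraMap ℂ _ u = 0 := by simpa using h5
  rw [sub_eq_zero] at h6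
  rw [h6]; rfl

theorem isIntegral_trace_of_pow {d k : ℕ} (hk : 0 < k) {M : Matrix (Fin d) (Fin d) ℂ}
    (hM : M ^ k = 1) : IsIntegral ℤ M.trace := by
  rw [Matrix.trace_eq_sum_roots_charpoly]
  refine IsIntegral.multiset_sum fun z hz => ?_
  exact IsIntegral.of_pow hk (by rw [charpoly_root_pow hM z hz]; exact isIntegral_one)

/-- For an irreducible representation of degree `d` (encoded as a surjection `φ` of the group
algebra onto a matrix algebra) with character `χ`, the central character value `|C| χ(g) / d` at
the class `C` of `g` is an algebraic integer. -/
theorem isIntegral_central {G : Type*} [Group G] [Fintype G] [DecidableEq G] {d : ℕ} [NeZero d]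
    (φ : MonoidAlgebra ℂ G →ₐ[ℂ] Matrix (Fin d) (Fin d) ℂ) (hφ : Function.Surjective φ)
    (g : G) (C : Finset G) (hC : ∀ h, h ∈ C ↔ IsConj g h) :
    IsIntegral ℤ ((C.card : ℂ) * (φ (MonoidAlgebra.single g 1)).trace / d) := by
  set ρ : G →* Matrix (Fin d) (Fin d) ℂ :=
    (φ : MonoidAlgebra ℂ G →* _).comp (MonoidAlgebra.of ℂ G) with hρ
  have hρ' : ∀ h, φ (MonoidAlgebra.single h 1) = ρ h := fun h => rfl
  set M := ∑ h ∈ C, ρ h with hM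
  have hcomm : ∀ k, ρ k * M = M * ρ k := by
    intro k
    rw [hM, Finset.mul_sum, Finset.sum_mul]
    refine Finset.sum_nbij' (fun h => k * h * k⁻¹) (fun h => k⁻¹ * h * k) ?_ ?_ ?_ ?_ ?_
    · intro h hh
      rw [hC] at hh ⊢
      exact hh.trans (isConj_iff.2 ⟨k, rfl⟩)
    · intro h hh
      rw [hC] at hh ⊢
      exact hh.trans (isConj_iff.2 ⟨k⁻¹, by group⟩)
    · intro h _; group
    · intro h _; group
    · intro h _
      rw [← map_mul, ← map_mul]; congr 1; group
  have hcomm2 : ∀ a, Commute (φ a) M := by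
    intro a
    induction a using MonoidAlgebra.induction_on with
    | of g => exact hcomm g
    | add x y hx hy => rw [map_add]; exact hx.add_left hy
    | smul r x hx => rw [map_smul]; exact hx.smul_left r
  have hscal : M ∈ Set.range (Matrix.scalar (Fin d)) := by
    rw [Matrix.mem_range_scalar_iff_commute_single']
    intro i j
    obtain ⟨a, ha⟩ := hφ (Matrix.single i j 1)
    rw [← ha]; exact hcomm2 a
  obtain ⟨w, hw⟩ := hscal
  have hMint : IsIntegral ℤ M := by
    let Ψ : MonoidAlgebra ℤ G →ₐ[ℤ] Matrix (Fin d) (Fin d) ℂ := MonoidAlgebra.lift ℤ _ G ρ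
    have h1 := (IsIntegral.of_finite ℤ
      (∑ h ∈ C, (MonoidAlgebra.of ℤ G h))).map Ψ
    have h2 : Ψ (∑ h ∈ C, (MonoidAlgebra.of ℤ G h)) = M := by
      rw [map_sum, hM]
      exact Finset.sum_congr rfl fun h _ => by
        simp only [Ψ]; exact MonoidAlgebra.lift_of ρ h
    rwa [h2] at h1
  have hwint : IsIntegral ℤ w := by
    rw [← hw] at hMint
    have hinj : Function.Injective (Matrix.scalar (Fin d) : ℂ →+* Matrix (Fin d) (Fin d) ℂ) :=
      (Matrix.scalar (Fin d) : ℂ →+* Matrix (Fin d) (Fin d) ℂ).injective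
    exact (isIntegral_algHom_iff (RingHom.toIntAlgHom
      (Matrix.scalar (Fin d) : ℂ →+* Matrix (Fin d) (Fin d) ℂ)) hinj).1 hMint
  have htr : (C.card : ℂ) * (ρ g).trace = d * w := by
    have h1 : M.trace = d * w := by rw [← hw]; simp [Matrix.trace]
    rw [← h1, hM, Matrix.trace_sum, ← nsmul_eq_mul, ← Finset.sum_const]
    refine Finset.sum_congr rfl fun h hh => ?_
    obtain ⟨c, rfl⟩ := isConj_iff.1 ((hC h).1 hh)
    rw [map_mul, Matrix.trace_mul_comm, ← map_mul, ← mul_assoc]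
    simp
  rw [hρ', htr, mul_div_cancel_left₀ _ (by exact_mod_cast NeZero.ne d)]
  exact hwint

theorem not_isIntegral_inv_prime {p : ℕ} (hp : p.Prime) : ¬ IsIntegral ℤ ((p : ℂ)⁻¹) := by
  intro h
  have h1 : IsIntegral ℤ (algebraMap ℚ ℂ ((p : ℚ)⁻¹)) := by simpa using h
  rw [isIntegral_algebraMap_iff (algebraMap ℚ ℂ).injective] at h1
  obtain ⟨y, hy⟩ := IsIntegrallyClosed.isIntegral_iff.1 h1
  have hp0 : (p : ℚ) ≠ 0 := by exact_mod_cast hp.ne_zero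
  have h2 : ((y * p : ℤ) : ℚ) = 1 := by
    push_cast
    rw [show (y : ℚ) = (p : ℚ)⁻¹ from hy]
    field_simp
  have h3 : y * p = 1 := by exact_mod_cast h2
  have h4 : (p : ℤ) ∣ 1 := ⟨y, by rw [mul_comm]; exact h3.symm⟩
  exact hp.one_lt.ne' (by exact_mod_cast Int.natAbs_dvd_natAbs.2 h4 |> Nat.dvd_one.1)

/-- A nontrivial representation of a simple group is faithful, and the elements it maps into the
centre of the image form a normal subgroup. -/
theorem comm_of_scalar {G : Type*} [Group G] [IsSimpleGroup G] {d : ℕ}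
    (ρ : G →* Matrix (Fin d) (Fin d) ℂ) (hρ : ¬ ∀ h, ρ h = 1) {g : G} (hg : g ≠ 1) {u : ℂ}
    (hu : ρ g = Matrix.scalar (Fin d) u) (a b : G) : a * b = b * a := by
  let N : Subgroup G :=
    { carrier := {h | ∀ k, Commute (ρ h) (ρ k)}
      one_mem' := fun k => by rw [map_one]; exact Commute.one_left _
      mul_mem' := fun {x y} hx hy k => by rw [map_mul]; exact (hx k).mul_left (hy k)
      inv_mem' := fun {x} hx k => by
        have h1 : ρ x⁻¹ * ρ x = 1 := by rw [← map_mul]; simp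
        have h2 : ρ x * ρ x⁻¹ = 1 := by rw [← map_mul]; simp
        calc ρ x⁻¹ * ρ k = ρ x⁻¹ * ρ k * (ρ x * ρ x⁻¹) := by rw [h2, mul_one]
          _ = ρ x⁻¹ * (ρ k * ρ x) * ρ x⁻¹ := by simp only [mul_assoc]
          _ = ρ x⁻¹ * (ρ x * ρ k) * ρ x⁻¹ := by rw [(hx k).eq]
          _ = (ρ x⁻¹ * ρ x) * ρ k * ρ x⁻¹ := by simp only [mul_assoc]
          _ = ρ k * ρ x⁻¹ := by rw [h1, one_mul] }
  have hN : N.Normal := by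
    refine ⟨fun h hh x => ?_⟩
    have : ρ (x * h * x⁻¹) = ρ h := by
      rw [map_mul, map_mul, ← (hh x).eq, mul_assoc, ← map_mul]; simp
    intro k
    rw [this]; exact hh k
  have hgN : g ∈ N := fun k => by
    rw [hu]; exact Matrix.scalar_commute u (fun _ => mul_comm _ _) _
  have hNtop : N = ⊤ := by
    refine hN.eq_bot_or_eq_top.resolve_left fun h => hg ?_
    rwa [h, Subgroup.mem_bot] at hgN
  have hker : ρ.ker = ⊥ := by
    refine (inferInstance : ρ.ker.Normal).eq_bot_or_eq_top.resolve_right fun h => hρ fun k => ?_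
    have : k ∈ ρ.ker := by rw [h]; trivial
    exact this
  have hinj := (MonoidHom.ker_eq_bot_iff ρ).1 hker
  have ha : a ∈ N := by rw [hNtop]; trivial
  exact hinj (by rw [map_mul, map_mul]; exact ha b)

/-- Burnside: a finite simple group with a nontrivial conjugacy class of prime power size is
commutative. Otherwise every nontrivial irreducible component contributes `p` times an algebraic
integer to the regular character at `g`, so that `1 / p` would be an algebraic integer. -/
theorem comm_of_card_conj {G : Type*} [Group G] [Finite G] [IsSimpleGroup G] {p k : ℕ}
    (hp : p.Prime) {g : G} (hg : g ≠ 1) (hcard : Nat.card (conjugatesOf g) = p ^ k) (a b : G) :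
    a * b = b * a := by
  classical
  cases nonempty_fintype G
  by_contra hab
  obtain ⟨n, d, hd, ⟨e⟩⟩ := IsSemisimpleRing.exists_algEquiv_pi_matrix_of_isAlgClosed ℂ
    (MonoidAlgebra ℂ G)
  let φ : (i : Fin n) → MonoidAlgebra ℂ G →ₐ[ℂ] Matrix (Fin (d i)) (Fin (d i)) ℂ := fun i =>
    (Pi.evalAlgHom ℂ (fun i => Matrix (Fin (d i)) (Fin (d i)) ℂ) i).comp e.toAlgHom
  have hφe : ∀ i x, φ i x = e x i := fun _ _ => rfl
  have hφ : ∀ i, Function.Surjective (φ i) := fun i y => by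
    refine ⟨e.symm (Pi.single i y), ?_⟩
    rw [hφe, AlgEquiv.apply_symm_apply, Pi.single_eq_same]
  let ρ : (i : Fin n) → G →* Matrix (Fin (d i)) (Fin (d i)) ℂ := fun i =>
    (φ i : MonoidAlgebra ℂ G →* _).comp (MonoidAlgebra.of ℂ G)
  have hρ' : ∀ i h, φ i (MonoidAlgebra.single h 1) = ρ i h := fun _ _ => rfl
  let C : Finset G := Finset.univ.filter fun h => IsConj g h
  have hC : ∀ h, h ∈ C ↔ IsConj g h := fun h => by simp [C]
  have hCcard : C.card = p ^ k := by
    rw [← hcard, Nat.card_eq_fintype_card]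
    symm
    refine Fintype.card_of_subtype C fun h => ?_
    rw [hC]; rfl
  -- If `p ∤ d i` then `χ(g) / d i` is integral, hence `χ(g) = 0` unless `ρ i g` is scalar; the
  -- scalar case would make `G` commutative. In all remaining cases the
  -- nontrivial components contribute a multiple of `p`
  have hnontriv : ∀ i, (¬ ∀ h, ρ i h = 1) →
      ∃ α : ℂ, IsIntegral ℤ α ∧ (d i : ℂ) * (ρ i g).trace = p * α := by
    intro i hi
    have := hd i
    have hpos : 0 < orderOf g := orderOf_pos g
    have hMk : ρ i g ^ orderOf g = 1 := by rw [← map_pow, pow_orderOf_eq_one, map_one]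
    have htint := isIntegral_trace_of_pow hpos hMk
    by_cases hpd : p ∣ d i
    · obtain ⟨c, hc⟩ := hpd
      refine ⟨c * (ρ i g).trace, ?_, by
        rw [show (d i : ℂ) = p * c by exact_mod_cast hc, mul_assoc]⟩
      exact (isIntegral_natCast c).mul htint
    · refine ⟨0, isIntegral_zero, ?_⟩
      have hcop : IsCoprime ((p ^ k : ℕ) : ℤ) (d i : ℤ) :=
        Nat.isCoprime_iff_coprime.2 (((Nat.Prime.coprime_iff_not_dvd hp).2 hpd).pow_left k)
      obtain ⟨u, v, huv⟩ := hcop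
      have hcent := isIntegral_central (φ i) (hφ i) g C hC
      rw [hρ', hCcard] at hcent
      have hd0 : (d i : ℂ) ≠ 0 := by exact_mod_cast NeZero.ne (d i)
      have huv' : (u : ℂ) * ((p ^ k : ℕ) : ℂ) + v * (d i : ℂ) = 1 := by exact_mod_cast huv
      have hint : IsIntegral ℤ ((ρ i g).trace / d i) := by
        have h1 : (ρ i g).trace / d i =
            u * (((p ^ k : ℕ) : ℂ) * (ρ i g).trace / d i) + v * (ρ i g).trace := by
          field_simp
          linear_combination (-(ρ i g).trace) * huv'
        rw [h1]
        exact ((isIntegral_intCast u).mul hcent).add ((isIntegral_intCast v).mul htint)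
      have hroots : (ρ i g).charpoly.roots.card = d i := by
        rw [← (IsAlgClosed.splits _).natDegree_eq_card_roots, Matrix.charpoly_natDegree_eq_dim,
          Fintype.card_fin]
      have hroots0 : (ρ i g).charpoly.roots ≠ 0 := by
        intro h; rw [h] at hroots; exact NeZero.ne (d i) hroots.symm
      rw [Matrix.trace_eq_sum_roots_charpoly,
        ← show ((ρ i g).charpoly.roots.card : ℂ) = d i by exact_mod_cast hroots] at hint
      rcases sum_roots_of_unity hpos _ (charpoly_root_pow hMk) hroots0 hint with h | ⟨u, hu⟩
      · rw [Matrix.trace_eq_sum_roots_charpoly, h]; simp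
      · exact absurd (comm_of_scalar (ρ i) hi hg (scalar_of_roots_eq hpos hMk hu) a b) hab
  -- there is exactly one trivial component, and it has degree one
  let ε : MonoidAlgebra ℂ G →ₐ[ℂ] ℂ := MonoidAlgebra.lift ℂ ℂ G 1
  have hε : ∀ h, ε (MonoidAlgebra.single h 1) = 1 := fun h => by
    exact (MonoidAlgebra.lift_of (R := ℂ) (1 : G →* ℂ) h).trans rfl
  have htriv : ∀ i, (∀ h, ρ i h = 1) → ∀ x, φ i x = Matrix.scalar (Fin (d i)) (ε x) := by
    intro i hi x
    induction x using MonoidAlgebra.induction_on with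
    | of h =>
      rw [MonoidAlgebra.of_apply, hρ', hi, hε, map_one]
    | add x y hx hy => rw [map_add, map_add, map_add, hx, hy]
    | smul r x hx =>
      rw [map_smul, map_smul, hx, smul_eq_mul, map_mul, Matrix.smul_eq_diagonal_mul]; rfl
  have hdeg : ∀ i, (∀ h, ρ i h = 1) → d i = 1 := by
    intro i hi
    by_contra hne
    have := hd i
    have h2 : 1 < d i := by have := NeZero.ne (d i); omega
    obtain ⟨x, hx⟩ := hφ i (Matrix.single ⟨0, by omega⟩ ⟨0, by omega⟩ 1)
    rw [htriv i hi] at hx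
    have e1 := congrFun (congrFun hx ⟨0, by omega⟩) ⟨0, by omega⟩
    have e2 := congrFun (congrFun hx ⟨1, by omega⟩) ⟨1, by omega⟩
    simp [Matrix.single] at e1 e2
    rw [e1] at e2; exact one_ne_zero e2
  obtain ⟨i₀, hi₀⟩ : ∃ i, ∀ h, ρ i h = 1 := by
    -- the norm element `∑ h` is fixed by left multiplication, so `G` acts trivially on any
    -- component in which its image, a scalar matrix, does not vanish
    set s : MonoidAlgebra ℂ G := ∑ h, MonoidAlgebra.single h 1 with hs
    have hmul : ∀ k, MonoidAlgebra.single k 1 * s = s := by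
      intro k
      rw [hs, Finset.mul_sum]
      simp only [MonoidAlgebra.single_mul_single, mul_one]
      exact Fintype.sum_equiv (Equiv.mulLeft k) _ _ fun h => rfl
    have hmul' : ∀ k, s * MonoidAlgebra.single k 1 = s := by
      intro k
      rw [hs, Finset.sum_mul]
      simp only [MonoidAlgebra.single_mul_single, mul_one]
      exact Fintype.sum_equiv (Equiv.mulRight k) _ _ fun h => rfl
    have hs0 : s ≠ 0 := by
      intro h
      have h1 : ε s = 0 := by rw [h, map_zero]
      rw [hs, map_sum] at h1
      simp [hε] at h1
    have hes : e s ≠ 0 := fun h => hs0 (by simpa using h)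
    obtain ⟨i, hi⟩ := Function.ne_iff.1 hes
    refine ⟨i, fun h => ?_⟩
    have hcomm : ∀ x, Commute (φ i x) (φ i s) := by
      intro x
      induction x using MonoidAlgebra.induction_on with
      | of k =>
        rw [MonoidAlgebra.of_apply, Commute, SemiconjBy, ← map_mul, ← map_mul, hmul, hmul']
      | add x y hx hy => rw [map_add]; exact hx.add_left hy
      | smul r x hx => rw [map_smul]; exact hx.smul_left r
    have hscal : φ i s ∈ Set.range (Matrix.scalar (Fin (d i))) := by
      rw [Matrix.mem_range_scalar_iff_commute_single']
      intro j l
      obtain ⟨x, hx⟩ := hφ i (Matrix.single j l 1)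
      rw [← hx]; exact hcomm x
    obtain ⟨w, hw⟩ := hscal
    have hw0 : w ≠ 0 := by
      rintro rfl
      rw [map_zero] at hw
      exact hi hw.symm
    have h1 : ρ i h * φ i s = φ i s := by rw [← hρ', ← map_mul, hmul]
    rw [← hw] at h1
    have h2 : ρ i h * (Matrix.scalar (Fin (d i)) w * Matrix.scalar (Fin (d i)) w⁻¹) =
        Matrix.scalar (Fin (d i)) w * Matrix.scalar (Fin (d i)) w⁻¹ := by
      rw [← mul_assoc, h1]
    rwa [← map_mul, mul_inv_cancel₀ hw0, map_one, mul_one] at h2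
  have huniq : ∀ j, j ≠ i₀ → ¬ ∀ h, ρ j h = 1 := by
    intro j hj hjt
    -- two trivial components would both compute `ε`, contradicting the existence of an element
    -- mapping to `1` in one and to `0` in the other
    set x := e.symm (Pi.single i₀ 1) with hx
    have h1 : φ i₀ x = 1 := by rw [hφe, hx, AlgEquiv.apply_symm_apply, Pi.single_eq_same]
    have h2 : φ j x = 0 := by
      rw [hφe, hx, AlgEquiv.apply_symm_apply, Pi.single_eq_of_ne hj]
    rw [htriv _ hi₀] at h1
    rw [htriv _ hjt] at h2
    have := hd i₀
    have := hd j
    have e1 := congrFun (congrFun h1 0) 0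
    have e2 := congrFun (congrFun h2 0) 0
    simp at e1 e2
    rw [e1] at e2; exact one_ne_zero e2
  have hsum := regular_trace e hg
  rw [← Finset.add_sum_erase _ _ (Finset.mem_univ i₀)] at hsum
  have hone : (d i₀ : ℂ) * (e (MonoidAlgebra.single g 1) i₀).trace = 1 := by
    rw [← hφe, hρ', hi₀, Matrix.trace_one, Fintype.card_fin, hdeg i₀ hi₀]; simp
  rw [hone] at hsum
  choose! α hα1 hα2 using hnontriv
  have hrest : ∑ i ∈ Finset.univ.erase i₀, (d i : ℂ) * (e (MonoidAlgebra.single g 1) i).trace =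
      p * ∑ i ∈ Finset.univ.erase i₀, α i := by
    rw [Finset.mul_sum]
    refine Finset.sum_congr rfl fun i hi => ?_
    rw [← hφe, hρ']
    exact hα2 i (huniq i (Finset.ne_of_mem_erase hi))
  rw [hrest] at hsum
  have hint : IsIntegral ℤ (-∑ i ∈ Finset.univ.erase i₀, α i) :=
    (IsIntegral.sum _ fun i hi => hα1 i (huniq i (Finset.ne_of_mem_erase hi))).neg
  refine not_isIntegral_inv_prime hp ?_
  have hp0 : (p : ℂ) ≠ 0 := by exact_mod_cast hp.ne_zero
  rw [show (p : ℂ)⁻¹ = -∑ i ∈ Finset.univ.erase i₀, α i by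
    field_simp
    linear_combination hsum]
  exact hint

/-! ### Solvability criteria of Burnside, Wielandt and Hall -/

theorem card_conjugatesOf_dvd {G : Type*} [Group G] [Finite G] (P : Subgroup G) {z : G}
    (hz : ∀ x ∈ P, x * z = z * x) : Nat.card (conjugatesOf z) ∣ P.index := by
  have h1 : conjugatesOf z = MulAction.orbit (ConjAct G) z := by
    ext x
    rw [ConjAct.mem_orbit_conjAct]
    exact isConj_comm
  have h2 := MulAction.index_stabilizer (ConjAct G) z
  rw [h1, Nat.card_coe_set_eq, ← h2]
  have h3 : (P.map (ConjAct.toConjAct : G ≃* ConjAct G).toMonoidHom).index = P.index :=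
    Subgroup.index_map_equiv P ConjAct.toConjAct
  rw [← h3]
  refine Subgroup.index_dvd_of_le ?_
  rintro _ ⟨x, hx, rfl⟩
  rw [MulAction.mem_stabilizer_iff]
  change x * z * x⁻¹ = z
  rw [hz x hx, mul_inv_cancel_right]

/-- Burnside's `p^a q^b` theorem. If `G` is simple, a central element of a Sylow `p`-subgroup has
a conjugacy class of `q`-power size, to which `comm_of_card_conj` applies. -/
theorem burnside_paqb {p q : ℕ} (hp : p.Prime) (hq : q.Prime) (n : ℕ) :
    ∀ (G : Type u) [Group G] [Finite G], Nat.card G = n → (∃ a b, n = p ^ a * q ^ b) →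
      Group.IsSolvable G := by
  induction n using Nat.strong_induction_on with
  | _ n ih =>
  intro G _ _ hn ⟨a, b, hab⟩
  have hdvd : ∀ m, m ∣ n → ∃ a b, m = p ^ a * q ^ b := by
    intro m hm
    rw [hab] at hm
    obtain ⟨x, y, hx, hy, rfl⟩ := exists_dvd_and_dvd_of_dvd_mul hm
    obtain ⟨i, -, rfl⟩ := (Nat.dvd_prime_pow hp).1 hx
    obtain ⟨j, -, rfl⟩ := (Nat.dvd_prime_pow hq).1 hy
    exact ⟨i, j, rfl⟩
  have := Fact.mk hp
  have := Fact.mk hq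
  have hpos : 0 < Nat.card G := Nat.card_pos
  by_cases htriv : Subsingleton G
  · infer_instance
  rw [not_subsingleton_iff_nontrivial] at htriv
  by_cases hsimple : ∀ N : Subgroup G, N.Normal → N = ⊥ ∨ N = ⊤
  · have : IsSimpleGroup G := { eq_bot_or_eq_top_of_normal := hsimple }
    obtain ⟨P⟩ : Nonempty (Sylow p G) := inferInstance
    have hcop : Nat.Coprime (P : Subgroup G).index (p ^ a) :=
      ((Nat.Prime.coprime_iff_not_dvd hp).2 P.not_dvd_index).symm.pow_right a
    have hidx : (P : Subgroup G).index ∣ q ^ b :=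
      hcop.dvd_of_dvd_mul_left (by rw [← hab, ← hn]; exact Subgroup.index_dvd_card _)
    by_cases hP : (P : Subgroup G) = ⊥
    · rw [hP, Subgroup.index_bot] at hidx
      obtain ⟨j, -, hj⟩ := (Nat.dvd_prime_pow hq).1 hidx
      have := (IsPGroup.of_card hj).isNilpotent
      infer_instance
    · have hPn : Nontrivial (P : Subgroup G) := (Subgroup.nontrivial_iff_ne_bot _).2 hP
      have := P.isPGroup'.center_nontrivial
      obtain ⟨z, hz⟩ := exists_ne (1 : Subgroup.center (P : Subgroup G))
      have hz1 : ((z : (P : Subgroup G)) : G) ≠ 1 := fun h => hz (by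
        ext; exact h)
      have hc := card_conjugatesOf_dvd (P : Subgroup G) (z := ((z : (P : Subgroup G)) : G))
        fun x hx => congrArg Subtype.val (Subgroup.mem_center_iff.1 z.2 ⟨x, hx⟩)
      obtain ⟨j, -, hj⟩ := (Nat.dvd_prime_pow hq).1 (hc.trans hidx)
      exact Group.isSolvable_of_comm (comm_of_card_conj hq hz1 hj)
  · push Not at hsimple
    obtain ⟨N, hN, hbot, htop⟩ := hsimple
    rw [Group.isSolvable_iff_subgroup_quotient N]
    have hcard := N.index_mul_card
    constructor
    · refine ih (Nat.card N) ?_ N rfl (hdvd _ ?_)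
      · rw [← hn]
        exact lt_of_le_of_ne (Subgroup.card_le_card_group N) fun h => htop
          (Subgroup.card_eq_iff_eq_top N |>.1 h)
      · rw [← hn]; exact N.card_subgroup_dvd_card
    · refine ih (Nat.card (G ⧸ N)) ?_ (G ⧸ N) rfl (hdvd _ ?_)
      · rw [← hn, ← Subgroup.index_eq_card, ← hcard]
        refine lt_mul_of_one_lt_right (Nat.pos_of_ne_zero Subgroup.index_ne_zero_of_finite) ?_
        exact N.one_lt_card_iff_ne_bot.2 hbot
      · rw [← hn, ← Subgroup.index_eq_card]; exact N.index_dvd_card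

/-- A nontrivial finite solvable group has a nontrivial normal `p`-subgroup, namely the
`p`-torsion of the last nontrivial term of the derived series. -/
theorem exists_normal_pgroup (G : Type*) [Group G] [Finite G] [Nontrivial G]
    [hs : Group.IsSolvable G] :
    ∃ p : ℕ, p.Prime ∧ ∃ M : Subgroup G, M.Normal ∧ M ≠ ⊥ ∧ IsPGroup p M := by
  classical
  have hex : ∃ n, derivedSeries G n = ⊥ := Group.IsSolvable.solvable
  have hn0 : Nat.find hex ≠ 0 := by
    intro h
    have := Nat.find_spec hex
    rw [h, derivedSeries_zero] at this
    exact top_ne_bot this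
  obtain ⟨m, hm⟩ := Nat.exists_eq_succ_of_ne_zero hn0
  set N := derivedSeries G m with hN
  have hNbot : N ≠ ⊥ := Nat.find_min hex (by omega)
  have hNn : N.Normal := derivedSeries_normal G m
  have hcomm : ∀ x ∈ N, ∀ y ∈ N, x * y = y * x := by
    have h1 : ⁅N, N⁆ = ⊥ := by
      rw [← derivedSeries_succ, ← Nat.succ_eq_add_one, ← hm]; exact Nat.find_spec hex
    intro x hx y hy
    have h2 := Subgroup.commutator_mem_commutator hx hy
    rw [h1, Subgroup.mem_bot, commutatorElement_eq_one_iff_mul_comm] at h2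
    exact h2
  have hcard := N.one_lt_card_iff_ne_bot.2 hNbot
  set p := (Nat.card N).minFac with hp
  have hpp : p.Prime := Nat.minFac_prime hcard.ne'
  have := Fact.mk hpp
  obtain ⟨x, hx⟩ := exists_prime_orderOf_dvd_card' (G := N) p (Nat.minFac_dvd _)
  let M : Subgroup G :=
    { carrier := {g | g ∈ N ∧ g ^ p = 1}
      one_mem' := ⟨one_mem _, one_pow _⟩
      mul_mem' := fun {a b} ha hb => ⟨mul_mem ha.1 hb.1, by
        rw [(show Commute a b from hcomm a ha.1 b hb.1).mul_pow, ha.2, hb.2, one_mul]⟩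
      inv_mem' := fun {a} ha => ⟨inv_mem ha.1, by rw [inv_pow, ha.2, inv_one]⟩ }
  refine ⟨p, hpp, M, ⟨fun g hg h => ⟨hNn.conj_mem g hg.1 h, ?_⟩⟩, ?_, ?_⟩
  · rw [conj_pow, hg.2]; simp
  · intro h
    have hxM : (x : G) ∈ M := ⟨x.2, by
      rw [← Subgroup.coe_pow, ← hx, pow_orderOf_eq_one]; rfl⟩
    rw [h, Subgroup.mem_bot] at hxM
    have : x = 1 := by ext; exact hxM
    rw [this, orderOf_one] at hx
    exact hpp.one_lt.ne hx
  · intro g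
    exact ⟨1, by ext; simpa using g.2.2⟩

theorem relIndex_eq_index_of_coprime {G : Type*} [Group G] [Finite G] {H K : Subgroup G}
    (h : H.index.Coprime K.index) : H.relIndex K = H.index := by
  have h1 := Subgroup.relIndex_mul_index (inf_le_right : H ⊓ K ≤ K)
  have h2 := Subgroup.relIndex_mul_index (inf_le_left : H ⊓ K ≤ H)
  rw [Subgroup.inf_relIndex_right] at h1
  rw [Subgroup.inf_relIndex_left] at h2
  have h3 : H.index ∣ H.relIndex K :=
    h.dvd_of_dvd_mul_right (by rw [h1, ← h2]; exact dvd_mul_left _ _)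
  have h4 : H.relIndex K ≤ H.index := by
    rw [← Subgroup.relIndex_top_right H]
    exact Subgroup.relIndex_le_of_le_right le_top (by
      rw [Subgroup.relIndex_top_right]; exact Subgroup.index_ne_zero_of_finite)
  have h5 : 0 < H.relIndex K := Nat.pos_of_ne_zero fun h0 => by
    rw [h0, zero_mul] at h1
    exact Subgroup.index_ne_zero_of_finite h1.symm
  exact le_antisymm h4 (Nat.le_of_dvd h5 h3)

/-- Subgroups of coprime indices factorize the group. -/
theorem exists_mul_of_coprime {G : Type*} [Group G] [Finite G] {H K : Subgroup G}
    (h : H.index.Coprime K.index) (g : G) : ∃ k ∈ K, ∃ h ∈ H, g = k * h := by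
  have h1 := MulAction.index_stabilizer K ((1 : G) : G ⧸ H)
  have h2 : MulAction.stabilizer K ((1 : G) : G ⧸ H) = H.subgroupOf K := by
    ext k
    rw [MulAction.mem_stabilizer_iff, Subgroup.mem_subgroupOf]
    change (((k : G) * 1 : G) : G ⧸ H) = _ ↔ _
    rw [mul_one, eq_comm, QuotientGroup.eq, inv_one, one_mul]
  rw [h2] at h1
  change H.relIndex K = _ at h1
  rw [relIndex_eq_index_of_coprime h, Subgroup.index_eq_card] at h1
  have h3 : MulAction.orbit K ((1 : G) : G ⧸ H) = Set.univ := by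
    rw [Set.eq_univ_iff_ncard, ← h1]
  have h4 : (g : G ⧸ H) ∈ MulAction.orbit K ((1 : G) : G ⧸ H) := by rw [h3]; trivial
  obtain ⟨k, hk⟩ := h4
  change (((k : G) * 1 : G) : G ⧸ H) = _ at hk
  rw [mul_one, QuotientGroup.eq] at hk
  exact ⟨k, k.2, (k : G)⁻¹ * g, hk, by group⟩

/-- If `M` is a normal `p`-subgroup of `H`, then any `K` whose index is prime to `p` and to the
index of `H` contains all conjugates of `M` in the whole group. By Sylow some conjugate of `M` lies
in `K`, and since `G = H K` all conjugates of `M` are conjugate under `K`. -/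
theorem exists_normal_le {G : Type*} [Group G] [Finite G] {p : ℕ} (hp : p.Prime)
    {H K M : Subgroup G} (hM : ∀ h ∈ H, ∀ m ∈ M, h * m * h⁻¹ ∈ M)
    (hMp : IsPGroup p M) (hHK : H.index.Coprime K.index) (hpK : ¬ p ∣ K.index) :
    Subgroup.normalClosure (M : Set G) ≤ K := by
  have := Fact.mk hp
  -- a conjugate of `M` lies in `K`
  obtain ⟨Q⟩ : Nonempty (Sylow p K) := inferInstance
  have hQ : IsPGroup p ((Q : Subgroup K).map K.subtype) := Q.isPGroup'.map _
  have hQi : ¬ p ∣ ((Q : Subgroup K).map K.subtype).index := by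
    rw [Subgroup.index_map_subtype]
    exact hp.not_dvd_mul Q.not_dvd_index hpK
  obtain ⟨R, hR⟩ := hMp.exists_le_sylow
  obtain ⟨g, hg⟩ := MulAction.exists_smul_eq G R (hQ.toSylow hQi)
  have hconj : ∀ m ∈ M, g * m * g⁻¹ ∈ K := by
    intro m hm
    have h1 : g * m * g⁻¹ ∈ ((g • R : Sylow p G) : Subgroup G) := by
      rw [Sylow.coe_subgroup_smul]
      exact ⟨m, hR hm, rfl⟩
    rw [hg] at h1
    obtain ⟨x, -, hx⟩ := h1
    rw [← hx]; exact x.2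
  rw [Subgroup.normalClosure, Subgroup.closure_le]
  intro x hx
  obtain ⟨m, hm, hmx⟩ := Group.mem_conjugatesOfSet_iff.1 hx
  obtain ⟨c, rfl⟩ := isConj_iff.1 hmx
  -- write `g⁻¹` and `c⁻¹` in the factorization `G = H K`; the `H`-parts normalize `M`
  obtain ⟨h₁, hh₁, k₁, hk₁, e₁⟩ := exists_mul_of_coprime hHK.symm g⁻¹
  obtain ⟨h₂, hh₂, k₂, hk₂, e₂⟩ := exists_mul_of_coprime hHK.symm c⁻¹
  have e1 : g = k₁⁻¹ * h₁⁻¹ := by rw [← mul_inv_rev, ← e₁, inv_inv]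
  have e2 : c = k₂⁻¹ * h₂⁻¹ := by rw [← mul_inv_rev, ← e₂, inv_inv]
  have hm' : h₁ * (h₂⁻¹ * m * h₂) * h₁⁻¹ ∈ M := by
    refine hM _ hh₁ _ ?_
    simpa using hM _ (inv_mem hh₂) _ hm
  have h3 := hconj _ hm'
  have h4 : k₁ * (g * (h₁ * (h₂⁻¹ * m * h₂) * h₁⁻¹) * g⁻¹) * k₁⁻¹ ∈ K :=
    mul_mem (mul_mem hk₁ h3) (inv_mem hk₁)
  have h5 : c * m * c⁻¹ =
      k₂⁻¹ * (k₁ * (g * (h₁ * (h₂⁻¹ * m * h₂) * h₁⁻¹) * g⁻¹) * k₁⁻¹) * k₂⁻¹⁻¹ := by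
    rw [e1, e2]; group
  rw [SetLike.mem_coe, h5]
  exact mul_mem (mul_mem (inv_mem hk₂) h4) (inv_mem (inv_mem hk₂))

/-- Wielandt: a finite group with three solvable subgroups of pairwise coprime indices is
solvable. A normal `p`-subgroup of the first one has its normal closure in one of the others, and
the quotient by this closure inherits the hypothesis. -/
theorem wielandt (n : ℕ) :
    ∀ (G : Type u) [Group G] [Finite G], Nat.card G = n → ∀ H : Fin 3 → Subgroup G,
      (∀ i, Group.IsSolvable (H i)) → (∀ i j, i ≠ j → (H i).index.Coprime (H j).index) →
      Group.IsSolvable G := by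
  induction n using Nat.strong_induction_on with
  | _ n ih =>
  intro G _ _ hn H hs hc
  by_cases h0 : H 0 = ⊥
  · have h1 := relIndex_eq_index_of_coprime (hc 1 0 (by decide))
    rw [h0, Subgroup.relIndex_bot_right, eq_comm, Subgroup.index_eq_one] at h1
    have := hs 1
    rw [h1] at this
    exact Group.isSolvable_of_surjective (f := (Subgroup.topEquiv (G := G)).toMonoidHom)
      (Subgroup.topEquiv (G := G)).surjective
  have := hs 0
  have : Nontrivial (H 0) := (Subgroup.nontrivial_iff_ne_bot _).2 h0
  obtain ⟨p, hp, M, hMn, hMb, hMp⟩ := exists_normal_pgroup (H 0)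
  obtain ⟨i, hi0, hi⟩ : ∃ i : Fin 3, (0 : Fin 3) ≠ i ∧ ¬ p ∣ (H i).index := by
    by_contra hcon
    push Not at hcon
    have h1 := hcon 1 (by decide)
    have h2 := hcon 2 (by decide)
    exact hp.one_lt.ne' (Nat.dvd_one.1 ((hc 1 2 (by decide)) ▸ Nat.dvd_gcd h1 h2))
  have hle := exists_normal_le hp (M := M.map (H 0).subtype)
    (by
      rintro h hh _ ⟨m, hm, rfl⟩
      exact ⟨_, hMn.conj_mem m hm ⟨h, hh⟩, rfl⟩) (hMp.map _) (hc 0 i hi0) hi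
  set N := Subgroup.normalClosure ((M.map (H 0).subtype : Subgroup G) : Set G) with hN
  have hNb : N ≠ ⊥ := by
    intro hb
    apply hMb
    have h1 : M.map (H 0).subtype ≤ ⊥ := by rw [← hb]; exact Subgroup.subset_normalClosure
    rw [le_bot_iff, Subgroup.map_eq_bot_iff_of_injective _ (H 0).subtype_injective] at h1
    exact h1
  rw [Group.isSolvable_iff_subgroup_quotient N]
  have hcard := N.index_mul_card
  constructor
  · have := hs i
    exact Group.isSolvable_of_isSolvable_injective (Subgroup.inclusion_injective hle)
  · refine ih (Nat.card (G ⧸ N)) ?_ (G ⧸ N) rfl (fun j => (H j).map (QuotientGroup.mk' N)) ?_ ?_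
    · rw [← hn, ← Subgroup.index_eq_card, ← hcard]
      refine lt_mul_of_one_lt_right (Nat.pos_of_ne_zero Subgroup.index_ne_zero_of_finite) ?_
      exact N.one_lt_card_iff_ne_bot.2 hNb
    · intro j
      have := hs j
      exact Group.isSolvable_of_surjective
        (f := (QuotientGroup.mk' N).subgroupMap (H j)) (MonoidHom.subgroupMap_surjective _ _)
    · intro j k hjk
      have hsurj := QuotientGroup.mk'_surjective N
      exact Nat.Coprime.coprime_dvd_left (Subgroup.index_map_dvd _ hsurj)
        (Nat.Coprime.coprime_dvd_right (Subgroup.index_map_dvd _ hsurj) (hc j k hjk))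

/-- Hall: a finite group with a `p`-complement for each prime `p` is solvable. -/
theorem hall (n : ℕ) :
    ∀ (G : Type u) [Group G] [Finite G], Nat.card G = n →
      (∀ p : ℕ, p.Prime → ∃ H : Subgroup G, H.index = p ^ (Nat.card G).factorization p) →
      Group.IsSolvable G := by
  induction n using Nat.strong_induction_on with
  | _ n ih =>
  intro G _ _ hn hH
  have hn0 : Nat.card G ≠ 0 := Nat.card_pos.ne'
  choose! H hH using hH
  have hcop : ∀ p q : ℕ, p.Prime → q.Prime → p ≠ q → (H p).index.Coprime (H q).index := by
    intro p q hp hq hpq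
    rw [hH p hp, hH q hq]
    exact Nat.Coprime.pow _ _ ((Nat.coprime_primes hp hq).2 hpq)
  have hsol : ∀ p ∈ (Nat.card G).primeFactors, Group.IsSolvable (H p) := by
    intro p hpm
    obtain ⟨hp, hpd, -⟩ := Nat.mem_primeFactors.1 hpm
    have hcard := (H p).index_mul_card
    have hK0 : Nat.card (H p) ≠ 0 := Nat.card_pos.ne'
    refine ih (Nat.card (H p)) ?_ (H p) rfl ?_
    · rw [← hn, ← hcard]
      refine lt_mul_of_one_lt_left Nat.card_pos ?_
      rw [hH p hp]
      exact Nat.one_lt_pow (hp.factorization_pos_of_dvd hn0 hpd).ne' hp.one_lt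
    · intro l hl
      have hfac : (Nat.card G).factorization l = (p ^ (Nat.card G).factorization p).factorization l
          + (Nat.card (H p)).factorization l := by
        conv_lhs => rw [← hcard, hH p hp]
        rw [Nat.factorization_mul (pow_ne_zero _ hp.ne_zero) hK0]; rfl
      rw [hp.factorization_pow] at hfac
      by_cases hlp : l = p
      · subst hlp
        rw [Finsupp.single_eq_same] at hfac
        refine ⟨⊤, ?_⟩
        rw [Subgroup.index_top, show (Nat.card (H l)).factorization l = 0 by omega, pow_zero]
      · rw [Finsupp.single_eq_of_ne hlp, zero_add] at hfac
        refine ⟨(H l).subgroupOf (H p), ?_⟩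
        rw [← hfac, ← hH l hl]
        exact relIndex_eq_index_of_coprime (hcop l p hl hp hlp)
  -- three prime divisors: Wielandt's theorem; at most two: Burnside's theorem
  by_cases h3 : 2 < (Nat.card G).primeFactors.card
  · obtain ⟨p, q, r, hp, hq, hr, hpq, hpr, hqr⟩ := Finset.two_lt_card_iff.1 h3
    have pp := Nat.prime_of_mem_primeFactors hp
    have pq := Nat.prime_of_mem_primeFactors hq
    have pr := Nat.prime_of_mem_primeFactors hr
    refine wielandt _ G rfl ![H p, H q, H r] ?_ ?_
    · intro i; fin_cases i
      · exact hsol p hp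
      · exact hsol q hq
      · exact hsol r hr
    · intro i j hij
      fin_cases i <;> fin_cases j
      · exact absurd rfl hij
      · exact hcop p q pp pq hpq
      · exact hcop p r pp pr hpr
      · exact hcop q p pq pp hpq.symm
      · exact absurd rfl hij
      · exact hcop q r pq pr hqr
      · exact hcop r p pr pp hpr.symm
      · exact hcop r q pr pq hqr.symm
      · exact absurd rfl hij
  · obtain ⟨p, q, hp, hq, hpq⟩ : ∃ p q : ℕ, p.Prime ∧ q.Prime ∧
        Nat.card G = p ^ (Nat.card G).factorization p * q ^ (if p = q then 0 else
          (Nat.card G).factorization q) := by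
      have hprod := Nat.prod_factorization_pow_eq_self hn0
      rw [Finsupp.prod, Nat.support_factorization] at hprod
      have hc : (Nat.card G).primeFactors.card = 0 ∨ (Nat.card G).primeFactors.card = 1 ∨
        (Nat.card G).primeFactors.card = 2 := by omega
      rcases hc with h | h | h
      · rw [Finset.card_eq_zero] at h
        rw [h, Finset.prod_empty] at hprod
        exact ⟨2, 2, Nat.prime_two, Nat.prime_two, by rw [← hprod]; simp⟩
      · obtain ⟨p, hp⟩ := Finset.card_eq_one.1 h
        have pp : p.Prime := Nat.prime_of_mem_primeFactors (by rw [hp]; simp)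
        rw [hp, Finset.prod_singleton] at hprod
        exact ⟨p, p, pp, pp, by simpa using hprod.symm⟩
      · obtain ⟨p, q, hne, hp⟩ := Finset.card_eq_two.1 h
        have pp : p.Prime := Nat.prime_of_mem_primeFactors (by rw [hp]; simp)
        have pq : q.Prime := Nat.prime_of_mem_primeFactors (by rw [hp]; simp)
        rw [hp, Finset.prod_pair hne] at hprod
        exact ⟨p, q, pp, pq, by rw [if_neg hne]; exact hprod.symm⟩
    exact burnside_paqb hp hq _ G rfl ⟨_, _, hpq⟩

/-! ### Bijective cocycles on primitive groups -/

theorem prime_dvd_of_nsmul {B : Type*} [AddGroup B] [Finite B] {k q : ℕ} (h : ∀ b : B, k • b = 0)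
    (hq : q.Prime) (hd : q ∣ Nat.card B) : q ∣ k := by
  have := Fact.mk hq
  obtain ⟨b, hb⟩ := exists_prime_addOrderOf_dvd_card' (G := B) q hd
  rw [← hb]
  exact addOrderOf_dvd_of_nsmul_eq_zero (h b)

theorem coprime_card_of_nsmul {B : Type*} [AddGroup B] [Finite B] {k l : ℕ}
    (h : ∀ b : B, k • b = 0) (hkl : k.Coprime l) : (Nat.card B).Coprime l :=
  Nat.Coprime.symm (Nat.coprime_of_dvd fun _ hq hl hd =>
    hq.one_lt.ne' (Nat.dvd_one.1 (hkl ▸ Nat.dvd_gcd (prime_dvd_of_nsmul h hq hd) hl)))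

theorem card_torsion {A : Type*} [AddCommGroup A] [Finite A] {s m : ℕ}
    (hcard : Nat.card A = s * m) (hsm : s.Coprime m) : Nat.card {a : A // m • a = 0} = m := by
  let f : A →+ A := nsmulAddMonoidHom m
  have h1 : Nat.card f.ker = Nat.card {a : A // m • a = 0} := rfl
  have h2 := f.ker.index_mul_card
  rw [AddSubgroup.index_ker, hcard, h1] at h2
  have hA : ∀ a : A, (s * m) • a = 0 := fun a => by rw [← hcard]; exact card_nsmul_eq_zero'
  have h3 : (Nat.card {a : A // m • a = 0}).Coprime s := by
    rw [← h1]
    refine coprime_card_of_nsmul (fun b => ?_) hsm.symm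
    ext; exact b.2
  have h4 : (Nat.card f.range).Coprime m := by
    refine coprime_card_of_nsmul (k := s) (fun b => ?_) hsm
    obtain ⟨_, a, rfl⟩ := b
    ext
    change s • (m • a) = 0
    rw [← mul_nsmul', hA]
  refine Nat.dvd_antisymm (h3.dvd_of_dvd_mul_left ?_) (h4.symm.dvd_of_dvd_mul_left ?_)
  · rw [← h2]; exact dvd_mul_left _ _
  · rw [h2]; exact dvd_mul_left _ _

section cocycle

variable {G A : Type} [Group G] [AddCommGroup A] [DistribMulAction G A]

theorem cocycle_one {ψ : G → A} (hc : ∀ g h, ψ (g * h) = ψ g + g • ψ h) : ψ 1 = 0 := by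
  have := hc 1 1
  rw [one_smul, mul_one] at this
  exact left_eq_add.1 this

/-- The subgroup of elements sent by the cocycle `ψ` into the `m`-torsion, which is a
submodule. -/
def torsionSubgroup (ψ : G → A) (hc : ∀ g h, ψ (g * h) = ψ g + g • ψ h) (m : ℕ) :
    Subgroup G where
  carrier := {g | m • ψ g = 0}
  one_mem' := by change m • ψ 1 = 0; rw [cocycle_one hc, nsmul_zero]
  mul_mem' := fun {a b} (ha : m • ψ a = 0) (hb : m • ψ b = 0) => by
    change m • ψ (a * b) = 0
    rw [hc, nsmul_add, ha, smul_comm, hb, smul_zero, add_zero]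
  inv_mem' := fun {a} (ha : m • ψ a = 0) => by
    change m • ψ a⁻¹ = 0
    have h := hc a⁻¹ a
    rw [inv_mul_cancel, cocycle_one hc] at h
    rw [eq_neg_of_add_eq_zero_left h.symm, smul_neg, smul_comm, ha, smul_zero, neg_zero]

theorem card_torsionSubgroup [Finite A] {ψ : G → A} (hb : Function.Bijective ψ)
    (hc : ∀ g h, ψ (g * h) = ψ g + g • ψ h) {s m : ℕ}
    (hcard : Nat.card A = s * m) (hsm : s.Coprime m) : Nat.card (torsionSubgroup ψ hc m) = m := by
  refine Eq.trans ?_ (card_torsion hcard hsm)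
  exact Nat.card_congr ((Equiv.ofBijective ψ hb).subtypeEquiv fun g => Iff.rfl)

/-- A finite group with a bijective 1-cocycle to a module is solvable: for each prime `p`, the
preimage of the prime-to-`p` torsion is a `p`-complement. -/
theorem isSolvable_of_cocycle [Finite G] [Finite A] {ψ : G → A} (hb : Function.Bijective ψ)
    (hc : ∀ g h, ψ (g * h) = ψ g + g • ψ h) : Group.IsSolvable G := by
  refine hall _ G rfl fun p hp => ?_
  have hG0 : Nat.card G ≠ 0 := Nat.card_pos.ne'
  obtain ⟨m, hm⟩ := Nat.ordProj_dvd (Nat.card G) p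
  have hpm : ¬ p ∣ m := by
    have h1 := Nat.not_dvd_ordCompl hp hG0
    rwa [Nat.div_eq_of_eq_mul_right (pow_pos hp.pos _) hm] at h1
  have hcard : Nat.card A = p ^ (Nat.card G).factorization p * m := by
    rw [← hm]; exact (Nat.card_congr (Equiv.ofBijective ψ hb)).symm
  refine ⟨torsionSubgroup ψ hc m, ?_⟩
  have h1 := (torsionSubgroup ψ hc m).index_mul_card
  rw [card_torsionSubgroup hb hc hcard (((Nat.Prime.coprime_iff_not_dvd hp).2 hpm).pow_left _),
    hm] at h1
  refine Nat.eq_of_mul_eq_mul_right (Nat.pos_of_ne_zero ?_) h1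
  rintro rfl
  exact hpm (dvd_zero _)

theorem eq_of_nsmul_eq {k m : ℕ} (hkm : k.Coprime m) {a b : A} (hk : k • a = k • b)
    (hm : m • a = m • b) : a = b := by
  obtain ⟨u, v, huv⟩ := Nat.isCoprime_iff_coprime.2 hkm
  have h : ∀ c : A, c = u • (k • c) + v • (m • c) := fun c => by
    rw [← natCast_zsmul, ← natCast_zsmul, ← mul_zsmul, ← mul_zsmul, ← add_zsmul, huv, one_zsmul]
  rw [h a, h b, hk, hm]

theorem exists_nsmul_eq {k m : ℕ} (hkm : k.Coprime m) {a : A} (hm : m • a = 0) :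
    ∃ b, a = k • b ∧ m • b = 0 := by
  obtain ⟨u, v, huv⟩ := Nat.isCoprime_iff_coprime.2 hkm
  refine ⟨u • a, ?_, by rw [smul_comm, hm, smul_zero]⟩
  rw [← natCast_zsmul, smul_comm, ← mul_zsmul]
  have h2 : a = (u * k + v * m : ℤ) • a := by rw [huv, one_zsmul]
  rw [add_zsmul, mul_zsmul a v, natCast_zsmul, hm, zsmul_zero, add_zero] at h2
  exact h2

/-- Let `ψ` be a bijective cocycle to a module `A` annihilated by `k m`, with `k` and `m` coprime.
A normal subgroup of order prime to `m` acts trivially on the `m`-torsion. Indeed the affine action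
`a ↦ k ψ(x) + x a` of the subgroup has a fixed point by averaging; `G` permutes the fixed points
transitively, so the affine action is trivial and hence so is its linear part. -/
theorem fix_of_normal [Finite G] {ψ : G → A} (hb : Function.Bijective ψ)
    (hc : ∀ g h, ψ (g * h) = ψ g + g • ψ h) {k m : ℕ} (hkm : k.Coprime m)
    (hA : ∀ a : A, (k * m) • a = 0) (N : Subgroup G) [hN : N.Normal]
    (hNm : (Nat.card N).Coprime m) {n : G} (hn : n ∈ N) {a : A} (ha : m • a = 0) : n • a = a := by
  classical
  cases nonempty_fintype G
  have hmk : ∀ a : A, m • (k • a) = 0 := fun a => by rw [← mul_nsmul, hA]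
  have hc' : ∀ g h, k • ψ (g * h) = k • ψ g + g • (k • ψ h) := fun g h => by
    rw [hc, nsmul_add, smul_comm]
  -- the affine action of `N` on the `m`-torsion has a fixed point
  obtain ⟨u, hu0, hu⟩ : ∃ u : A, m • u = 0 ∧ ∀ x ∈ N, k • ψ x + x • u = u := by
    obtain ⟨u, hu, hu0⟩ := exists_nsmul_eq hNm (a := ∑ x : N, k • ψ x) (by
      rw [← Finset.sum_nsmul]; simp [hmk])
    refine ⟨u, hu0, fun x hx => ?_⟩
    refine eq_of_nsmul_eq hNm ?_ ?_
    · rw [nsmul_add, smul_comm (Nat.card N) x u, ← hu, Finset.smul_sum]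
      have h1 : ∀ y : N, x • k • ψ (y : G) = k • ψ (x * y) - k • ψ x := fun y => by
        rw [hc']; abel
      simp only [h1]
      rw [Finset.sum_sub_distrib, Finset.sum_const, Finset.card_univ, ← Nat.card_eq_fintype_card,
        add_sub_cancel]
      exact Fintype.sum_equiv (Equiv.mulLeft ⟨x, hx⟩) _ _ fun y => rfl
    · rw [nsmul_add, hmk, smul_comm m x u, hu0, smul_zero, add_zero]
  -- by transitivity and normality every point of the `m`-torsion is fixed
  have key : ∀ a : A, m • a = 0 → ∀ x ∈ N, k • ψ x + x • a = a := by
    intro a ha x hx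
    obtain ⟨b, rfl, -⟩ := exists_nsmul_eq hkm ha
    obtain ⟨c, rfl, -⟩ := exists_nsmul_eq hkm hu0
    obtain ⟨g, rfl⟩ := hb.2 b
    obtain ⟨h, rfl⟩ := hb.2 c
    have h1 := hu ((g * h⁻¹)⁻¹ * x * (g * h⁻¹)) (by
      simpa using hN.conj_mem x hx (g * h⁻¹)⁻¹)
    rw [← hc'] at h1 ⊢
    have h2 : x * g = g * h⁻¹ * ((g * h⁻¹)⁻¹ * x * (g * h⁻¹) * h) := by group
    rw [h2, hc', h1, ← hc', inv_mul_cancel_right]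
  have h0 := key 0 (nsmul_zero _) n hn
  rw [smul_zero, add_zero] at h0
  have h1 := key a ha n hn
  rwa [h0, zero_add] at h1

end cocycle

/-- The fibres of an equivariant map are blocks. -/
theorem injective_or_const {G X Z : Type} [Group G] [MulAction G X] [MulAction G Z]
    [MulAction.IsPreprimitive G X] (f : X → Z) (hf : ∀ (g : G) x, f (g • x) = g • f x) :
    Function.Injective f ∨ ∀ x y, f x = f y := by
  by_cases h : ∀ x y, f x = f y
  · exact Or.inr h
  refine Or.inl fun x y hxy => ?_
  have hB : MulAction.IsBlock G (f ⁻¹' {f x}) := by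
    rw [MulAction.isBlock_iff_smul_eq_or_disjoint]
    intro g
    by_cases hg : g • f x = f x
    · left
      ext z
      rw [Set.mem_smul_set_iff_inv_smul_mem]
      simp only [Set.mem_preimage, Set.mem_singleton_iff, hf]
      rw [inv_smul_eq_iff, hg]
    · right
      rw [Set.disjoint_left]
      intro z hz hz'
      rw [Set.mem_smul_set_iff_inv_smul_mem] at hz
      simp only [Set.mem_preimage, Set.mem_singleton_iff, hf] at hz hz'
      rw [inv_smul_eq_iff, hz'] at hz
      exact hg hz.symm
  rcases MulAction.IsPreprimitive.isTrivialBlock_of_isBlock hB with h1 | h1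
  · exact h1 rfl hxy.symm
  · refine absurd (fun a b => ?_) h
    have ha : a ∈ f ⁻¹' {f x} := by rw [h1]; trivial
    have hb : b ∈ f ⁻¹' {f x} := by rw [h1]; trivial
    exact Eq.trans ha (Eq.symm hb)

/-- In a faithful primitive group, the centre of a nontrivial normal `p`-subgroup is normal and
hence transitive, so its centralizer acts with trivial point stabilizers. -/
theorem card_le_of_normal {G X : Type} [Group G] [Finite X] [MulAction G X] [FaithfulSMul G X]
    [MulAction.IsPreprimitive G X] [Finite G] (hX : 1 < Nat.card X) {p : ℕ} (hp : p.Prime)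
    (P : Subgroup G) [P.Normal] (hP : IsPGroup p P) : Nat.card P ≤ Nat.card X := by
  have := Fact.mk hp
  by_cases hnt : Nontrivial P
  · have := hP.center_nontrivial
    set Z : Subgroup G := (Subgroup.center P).map P.subtype with hZ
    have hZn : Z.Normal := ConjAct.normal_of_characteristic_of_normal
    obtain ⟨z, hz⟩ := exists_ne (1 : Subgroup.center P)
    have hnt : MulAction.fixedPoints Z X ≠ Set.univ := by
      intro h
      apply hz
      have h1 : ((z : P) : G) = 1 := by
        refine FaithfulSMul.eq_of_smul_eq_smul (α := X) fun x => ?_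
        have hx : x ∈ MulAction.fixedPoints Z X := by rw [h]; trivial
        rw [one_smul]
        exact hx ⟨_, ⟨z, z.2, rfl⟩⟩
      ext; exact h1
    have htr : MulAction.IsPretransitive Z X :=
      MulAction.IsQuasiPreprimitive.isPretransitive_of_normal hnt
    obtain ⟨x⟩ : Nonempty X := (Nat.card_pos_iff.1 (by omega)).1
    refine Nat.card_le_card_of_injective (fun g : P => (g : G) • x) fun g h hgh => ?_
    ext
    refine FaithfulSMul.eq_of_smul_eq_smul (α := X) fun y => ?_
    obtain ⟨⟨_, c, hc, rfl⟩, rfl⟩ := MulAction.exists_smul_eq Z x y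
    have hcomm : ∀ g : P, (g : G) * c = c * g := fun g =>
      congrArg Subtype.val (Subgroup.mem_center_iff.1 hc g)
    change (g : G) • (c : G) • x = (h : G) • (c : G) • x
    rw [← mul_smul, ← mul_smul, hcomm, hcomm, mul_smul, mul_smul]
    exact congrArg _ hgh
  · rw [not_nontrivial_iff_subsingleton] at hnt
    have : Nat.card P = 1 := Nat.card_eq_one_iff_unique.2 ⟨hnt, inferInstance⟩
    omega

/-- Let `G` be a primitive group on `X` with a bijective cocycle to a module `A` generated by an
equivariant image `ι(X)`. Then `ι` is constant. Some normal `p`-subgroup `N` is transitive on `X`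
and acts trivially on the `p'`-part of `A`, which is thus constant on `ι(X)` and has trivial
`G`-action. Then the `p`-part of `A` corresponds to a normal `p`-subgroup of `G`, which has order
at most `|X|`; this leaves no room for the `p`-parts of `ι(X)` to be distinct and nonzero. -/
theorem const_of_primitive {G X A : Type} [Group G] [Finite G] [Finite X] [MulAction G X]
    [FaithfulSMul G X] [MulAction.IsPreprimitive G X] [AddCommGroup A] [DistribMulAction G A]
    (ψ : G → A) (hb : Function.Bijective ψ) (hc : ∀ g h, ψ (g * h) = ψ g + g • ψ h)
    (ι : X → A) (hι : ∀ (g : G) x, ι (g • x) = g • ι x)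
    (hgen : AddSubgroup.closure (Set.range ι) = ⊤) (hX : 1 < Nat.card X) (x y : X) :
    ι x = ι y := by
  have : Finite A := Finite.of_surjective ψ hb.2
  have hXn : Nontrivial X := Finite.one_lt_card_iff_nontrivial.1 hX
  have hGn : Nontrivial G := by
    obtain ⟨x, y, hxy⟩ := exists_pair_ne X
    obtain ⟨g, hg⟩ := MulAction.exists_smul_eq G x y
    refine ⟨g, 1, ?_⟩
    rintro rfl
    exact hxy (by rw [← hg, one_smul])
  have := isSolvable_of_cocycle hb hc
  obtain ⟨p, hp, N, hN, hNb, hNp⟩ := exists_normal_pgroup G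
  have := Fact.mk hp
  have hntr : MulAction.fixedPoints N X ≠ Set.univ := by
    intro h
    apply hNb
    rw [Subgroup.eq_bot_iff_forall]
    intro n hn
    refine FaithfulSMul.eq_of_smul_eq_smul (α := X) fun x => ?_
    have hx : x ∈ MulAction.fixedPoints N X := by rw [h]; trivial
    rw [one_smul]
    exact hx ⟨n, hn⟩
  have hNtr : MulAction.IsPretransitive N X :=
    MulAction.IsQuasiPreprimitive.isPretransitive_of_normal hntr
  have hA0 : Nat.card A ≠ 0 := Nat.card_pos.ne'
  obtain ⟨m, hm⟩ := Nat.ordProj_dvd (Nat.card A) p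
  have hpm : ¬ p ∣ m := by
    have h1 := Nat.not_dvd_ordCompl hp hA0
    rwa [Nat.div_eq_of_eq_mul_right (pow_pos hp.pos _) hm] at h1
  have hpm' : p.Coprime m := (Nat.Prime.coprime_iff_not_dvd hp).2 hpm
  set v := (Nat.card A).factorization p
  set k := p ^ v with hk
  have hkm : k.Coprime m := hpm'.pow_left _
  have hA : ∀ a : A, (k * m) • a = 0 := fun a => by rw [← hm]; exact card_nsmul_eq_zero'
  have hNm : (Nat.card N).Coprime m := by
    obtain ⟨w, hw⟩ := IsPGroup.iff_card.1 hNp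
    rw [hw]; exact hpm'.pow_left _
  have hmk : ∀ a : A, m • (k • a) = 0 := fun a => by rw [← mul_nsmul, hA]
  have hkm0 : ∀ a : A, k • (m • a) = 0 := fun a => by rw [← mul_nsmul', hA]
  have hconst : ∀ x y, k • ι x = k • ι y := by
    intro x y
    obtain ⟨n, rfl⟩ := MulAction.exists_smul_eq N x y
    change _ = k • ι ((n : G) • x)
    rw [hι, smul_comm, fix_of_normal hb hc hkm hA N hNm n.2 (hmk _)]
  have hGtriv : ∀ (g : G) (a : A), g • (k • a) = k • a := by
    intro g a
    have ha : a ∈ AddSubgroup.closure (Set.range ι) := by rw [hgen]; trivial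
    induction ha using AddSubgroup.closure_induction with
    | mem a ha =>
      obtain ⟨x, rfl⟩ := ha
      rw [smul_comm, ← hι]; exact hconst _ _
    | zero => rw [nsmul_zero, smul_zero]
    | add a b _ _ ha hb => rw [nsmul_add, smul_add, ha, hb]
    | neg a _ ha => rw [smul_neg, smul_neg, ha]
  have hhom : ∀ g h, k • ψ (g * h) = k • ψ g + k • ψ h := fun g h => by
    rw [hc, nsmul_add, smul_comm k g, hGtriv]
  set P := torsionSubgroup ψ hc k with hPdef
  have hPn : P.Normal := by
    refine ⟨fun n (hn : k • ψ n = 0) g => ?_⟩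
    change k • ψ (g * n * g⁻¹) = 0
    rw [hhom, hhom, hn, add_zero, ← hhom, mul_inv_cancel, cocycle_one hc, nsmul_zero]
  have hPcard : Nat.card P = k := card_torsionSubgroup hb hc (by rw [hm, mul_comm]) hkm.symm
  have hle := card_le_of_normal hX hp P (IsPGroup.of_card hPcard)
  by_contra hxy
  rcases injective_or_const (G := G) (fun x => m • ι x) (fun g x => by
    rw [hι, smul_comm]) with hinj | hcon
  · have hne : ∀ x, m • ι x ≠ 0 := by
      intro z hz
      apply hxy
      refine congrArg ι (hinj ?_)
      have h0 : ∀ w, m • ι w = 0 := fun w => by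
        obtain ⟨g, rfl⟩ := MulAction.exists_smul_eq G z w
        rw [hι, smul_comm, hz, smul_zero]
      change m • ι x = m • ι y
      rw [h0, h0]
    -- zero together with the elements `m • ι x` would give `|X| + 1` elements of the `p`-part
    have hlt : Nat.card (Option X) ≤ Nat.card {a : A // k • a = 0} := by
      refine Nat.card_le_card_of_injective
        (fun o => o.elim ⟨0, nsmul_zero _⟩ fun x => ⟨m • ι x, hkm0 _⟩) ?_
      rintro (_ | a) (_ | b) h
      · rfl
      · exact absurd (congrArg Subtype.val h).symm (hne b)
      · exact absurd (congrArg Subtype.val h) (hne a)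
      · rw [hinj (congrArg Subtype.val h)]
    rw [Finite.card_option, card_torsion (by rw [hm, mul_comm]) hkm.symm] at hlt
    omega
  · exact hxy (eq_of_nsmul_eq hkm (hconst x y) (hcon x y))

/-! ### The brace structure on the permutation group of a cycle set -/

namespace CycleSet

variable {X Y : Type}

theorem sigma_apply (C : CycleSet X) (x y : X) : C.sigma x y = C.op x y := rfl

theorem sigma_mem_G (C : CycleSet X) (x : X) : C.sigma x ∈ C.G :=
  Subgroup.subset_closure ⟨x, rfl⟩

theorem sigma_comm (C : CycleSet X) (x y : X) :
    C.sigma (C.op x y) * C.sigma x = C.sigma (C.op y x) * C.sigma y := by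
  ext z
  exact C.cyc x y z

/-- The permutation `g ↦ σ_{g x} g` of `G(X)`, which is injective because squaring is. -/
noncomputable def addGen [Finite X] (C : CycleSet X) (hnd : C.Nondeg) (x : X) :
    Equiv.Perm C.G :=
  Equiv.ofBijective
    (fun g => ⟨C.sigma ((g : Equiv.Perm X) x) * g, mul_mem (C.sigma_mem_G _) g.2⟩)
    (Finite.injective_iff_bijective.1 fun g h hgh => by
      have h1 : C.sigma ((g : Equiv.Perm X) x) * g = C.sigma ((h : Equiv.Perm X) x) * h :=
        congrArg Subtype.val hgh
      have h2 : (g : Equiv.Perm X) x = (h : Equiv.Perm X) x :=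
        hnd.1 (congrArg (fun f : Equiv.Perm X => f x) h1)
      rw [h2] at h1
      ext1
      exact mul_left_cancel h1)

theorem addGen_apply [Finite X] (C : CycleSet X) (hnd : C.Nondeg) (x : X) (g : C.G) :
    ((C.addGen hnd x g : C.G) : Equiv.Perm X) = C.sigma ((g : Equiv.Perm X) x) * g := rfl

theorem addGen_comm [Finite X] (C : CycleSet X) (hnd : C.Nondeg) (x y : X) :
    C.addGen hnd x * C.addGen hnd y = C.addGen hnd y * C.addGen hnd x := by
  ext1 g
  ext1
  change C.sigma (C.op ((g : Equiv.Perm X) y) ((g : Equiv.Perm X) x)) *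
    (C.sigma ((g : Equiv.Perm X) y) * g) = C.sigma (C.op ((g : Equiv.Perm X) x)
      ((g : Equiv.Perm X) y)) * (C.sigma ((g : Equiv.Perm X) x) * g)
  rw [← mul_assoc, ← mul_assoc, C.sigma_comm]

/-- The additive group of the left brace on `G(X)`, realised as the (regular abelian) group of
permutations of `G(X)` generated by the maps `g ↦ σ_{g x} g`. An element of this group corresponds
to the element of `G(X)` to which it sends `1`. -/
noncomputable def addGroup [Finite X] (C : CycleSet X) (hnd : C.Nondeg) :
    Subgroup (Equiv.Perm C.G) :=
  Subgroup.closure (Set.range (C.addGen hnd))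

theorem addGroup_comm [Finite X] (C : CycleSet X) (hnd : C.Nondeg) {a b : Equiv.Perm C.G}
    (ha : a ∈ C.addGroup hnd) (hb : b ∈ C.addGroup hnd) : a * b = b * a := by
  refine Subgroup.closure_induction₂ (p := fun x y _ _ => Commute x y) ?_ ?_ ?_ ?_ ?_ ?_ ?_ ha hb
  · rintro _ _ ⟨x, rfl⟩ ⟨y, rfl⟩
    exact C.addGen_comm hnd x y
  · exact fun _ _ => Commute.one_left _
  · exact fun _ _ => Commute.one_right _
  · exact fun _ _ _ _ _ _ h1 h2 => h1.mul_left h2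
  · exact fun _ _ _ _ _ _ h1 h2 => h1.mul_right h2
  · exact fun _ _ _ _ h => h.inv_left
  · exact fun _ _ _ _ h => h.inv_right

/-- The action of `h` on the additive group sends the generator at `x` to the generator at
`h x`. -/
theorem conj_addGen [Finite X] (C : CycleSet X) (hnd : C.Nondeg) (h : C.G) (x : X) :
    (Equiv.mulRight h)⁻¹ * C.addGen hnd x * Equiv.mulRight h =
      C.addGen hnd ((h : Equiv.Perm X) x) := by
  rw [mul_assoc, inv_mul_eq_iff_eq_mul]
  ext1 g
  ext1
  change C.sigma _ * ((g : Equiv.Perm X) * h) = C.sigma _ * (g : Equiv.Perm X) * h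
  rw [mul_assoc]; rfl

theorem conj_mem_addGroup [Finite X] (C : CycleSet X) (hnd : C.Nondeg) (h : C.G)
    {a : Equiv.Perm C.G} (ha : a ∈ C.addGroup hnd) :
    (Equiv.mulRight h)⁻¹ * a * Equiv.mulRight h ∈ C.addGroup hnd := by
  induction ha using Subgroup.closure_induction with
  | mem a ha =>
    obtain ⟨x, rfl⟩ := ha
    rw [conj_addGen]
    exact Subgroup.subset_closure ⟨_, rfl⟩
  | one => rw [mul_one, inv_mul_cancel]; exact one_mem _
  | mul a b _ _ ha hb =>
    convert mul_mem ha hb using 1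
    group
  | inv a _ ha =>
    convert inv_mem ha using 1
    group

/-- `G(X)` acts on the additive group by conjugation through right translations. -/
noncomputable def conjHom [Finite X] (C : CycleSet X) (hnd : C.Nondeg) (h : C.G)
    (a : C.addGroup hnd) : C.addGroup hnd :=
  ⟨_, C.conj_mem_addGroup hnd h a.2⟩

theorem conjHom_coe [Finite X] (C : CycleSet X) (hnd : C.Nondeg) (h : C.G)
    (a : C.addGroup hnd) : (C.conjHom hnd h a : Equiv.Perm C.G) =
      (Equiv.mulRight h)⁻¹ * a * Equiv.mulRight h := rfl

theorem mulRight_mul' {G : Type*} [Group G] (g h : G) :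
    Equiv.mulRight (g * h) = Equiv.mulRight h * Equiv.mulRight g := by
  ext x; exact (mul_assoc _ _ _).symm

noncomputable instance [Finite X] (C : CycleSet X) (hnd : C.Nondeg) :
    AddCommGroup (Additive (C.addGroup hnd)) :=
  { (inferInstance : AddGroup (Additive (C.addGroup hnd))) with
    add_comm := fun a b => Subtype.ext (C.addGroup_comm hnd a.toMul.2 b.toMul.2) }

noncomputable instance [Finite X] (C : CycleSet X) (hnd : C.Nondeg) :
    DistribMulAction C.G (Additive (C.addGroup hnd)) where
  smul h a := Additive.ofMul (C.conjHom hnd h a.toMul)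
  one_smul a := by
    apply Subtype.ext
    change (Equiv.mulRight (1 : C.G))⁻¹ * (a.toMul : Equiv.Perm C.G) * Equiv.mulRight (1 : C.G) =
      (a.toMul : Equiv.Perm C.G)
    have : Equiv.mulRight (1 : C.G) = 1 := by ext x; simp
    rw [this, inv_one, one_mul, mul_one]
  mul_smul g h a := by
    apply Subtype.ext
    change (Equiv.mulRight (g * h))⁻¹ * (a.toMul : Equiv.Perm C.G) * Equiv.mulRight (g * h) =
      (Equiv.mulRight g)⁻¹ * ((Equiv.mulRight h)⁻¹ * a.toMul * Equiv.mulRight h) * Equiv.mulRight g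
    rw [mulRight_mul']
    group
  smul_zero h := by
    apply Subtype.ext
    change (Equiv.mulRight h)⁻¹ * (1 : Equiv.Perm C.G) * Equiv.mulRight h = 1
    group
  smul_add h a b := by
    apply Subtype.ext
    change (Equiv.mulRight h)⁻¹ * ((a.toMul : Equiv.Perm C.G) * b.toMul) * Equiv.mulRight h =
      (Equiv.mulRight h)⁻¹ * a.toMul * Equiv.mulRight h *
        ((Equiv.mulRight h)⁻¹ * b.toMul * Equiv.mulRight h)
    group

theorem exists_addGroup_eq [Finite X] (C : CycleSet X) (hnd : C.Nondeg) (g : C.G) :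
    ∃ a ∈ C.addGroup hnd, a 1 = g := by
  have hmul : ∀ (h : C.G) (a : Equiv.Perm C.G),
      a 1 * h = ((Equiv.mulRight h⁻¹)⁻¹ * a * Equiv.mulRight h⁻¹ : Equiv.Perm C.G) h := by
    intro h a
    change a 1 * h = (Equiv.mulRight h⁻¹).symm (a (h * h⁻¹))
    rw [mul_inv_cancel, eq_comm, Equiv.symm_apply_eq]
    exact (mul_inv_cancel_right _ _).symm
  obtain ⟨g, hg⟩ := g
  induction hg using Subgroup.closure_induction with
  | mem g hg =>
    obtain ⟨x, rfl⟩ := hg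
    refine ⟨C.addGen hnd x, Subgroup.subset_closure ⟨x, rfl⟩, Subtype.ext ?_⟩
    rw [addGen_apply]
    exact mul_one _
  | one => exact ⟨1, one_mem _, rfl⟩
  | mul g h _ _ ihg ihh =>
    obtain ⟨a, ha, hag⟩ := ihg
    obtain ⟨b, hb, hbh⟩ := ihh
    refine ⟨(Equiv.mulRight (b 1)⁻¹)⁻¹ * a * Equiv.mulRight (b 1)⁻¹ * b,
      mul_mem (C.conj_mem_addGroup hnd _ ha) hb, ?_⟩
    have h1 := hmul (b 1) a
    rw [Equiv.Perm.mul_apply, ← h1, hag, hbh]; rfl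
  | inv g _ ih =>
    obtain ⟨a, ha, hag⟩ := ih
    refine ⟨((Equiv.mulRight (a 1))⁻¹ * a * Equiv.mulRight (a 1))⁻¹,
      inv_mem (C.conj_mem_addGroup hnd _ ha), ?_⟩
    have h1 := hmul (a 1)⁻¹ a
    rw [mul_inv_cancel, inv_inv] at h1
    rw [Equiv.Perm.inv_eq_iff_eq]
    rw [hag] at h1 ⊢
    exact h1

/-- The additive group acts regularly on `G(X)`. -/
theorem ev_bijective [Finite X] (C : CycleSet X) (hnd : C.Nondeg) :
    Function.Bijective fun a : Additive (C.addGroup hnd) => (a.toMul : Equiv.Perm C.G) 1 := by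
  constructor
  · intro a b hab
    apply Subtype.ext
    ext1 g
    obtain ⟨c, hc, rfl⟩ := C.exists_addGroup_eq hnd g
    change (a.toMul : Equiv.Perm C.G) 1 = (b.toMul : Equiv.Perm C.G) 1 at hab
    change ((a.toMul : Equiv.Perm C.G) * c) 1 = ((b.toMul : Equiv.Perm C.G) * c) 1
    rw [C.addGroup_comm hnd a.toMul.2 hc, C.addGroup_comm hnd b.toMul.2 hc,
      Equiv.Perm.mul_apply, Equiv.Perm.mul_apply, hab]
  · intro g
    obtain ⟨c, hc, rfl⟩ := C.exists_addGroup_eq hnd g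
    exact ⟨Additive.ofMul ⟨c, hc⟩, rfl⟩

theorem Primitive.isPreprimitive {C : CycleSet X} (h : C.Primitive) :
    MulAction.IsPreprimitive C.G X where
  exists_smul_eq x y := by
    obtain ⟨g, hg, e⟩ := h.1 x y
    exact ⟨⟨g, hg⟩, e⟩
  isTrivialBlock_of_isBlock {B} hB := by
    refine h.2 B fun g hg => ?_
    rw [MulAction.isBlock_iff_smul_eq_or_disjoint] at hB
    exact hB ⟨g, hg⟩

/-- All left multiplications of a finite primitive non-degenerate cycle set coincide:
`const_of_primitive` applies to the additive group, and `x` is sent to the generator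
`g ↦ σ_{g x} g`, which determines `σ_x`. -/
theorem Primitive.sigma_eq [Finite X] {C : CycleSet X} (hprim : C.Primitive) (hnd : C.Nondeg)
    (hX : 1 < Nat.card X) (x y : X) : C.sigma x = C.sigma y := by
  have := hprim.isPreprimitive
  let e := Equiv.ofBijective _ (C.ev_bijective hnd)
  -- `e.symm` is a cocycle for the opposite multiplication; inversion turns it into a cocycle
  have he : ∀ a : Additive (C.addGroup hnd), e a = (a.toMul : Equiv.Perm C.G) 1 := fun _ => rfl
  have hmul : ∀ g h : C.G, e.symm (g * h) = e.symm h + h⁻¹ • e.symm g := by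
    intro g h
    rw [Equiv.symm_apply_eq, add_comm, he]
    change g * h = (Equiv.mulRight h⁻¹).symm
      (((e.symm g).toMul : Equiv.Perm C.G) (e (e.symm h) * h⁻¹))
    rw [Equiv.apply_symm_apply, mul_inv_cancel, ← he, Equiv.apply_symm_apply, eq_comm,
      Equiv.symm_apply_eq]
    exact (mul_inv_cancel_right _ _).symm
  have hone : e.symm 1 = 0 := by
    rw [Equiv.symm_apply_eq]; rfl
  have hinv : ∀ g : C.G, -e.symm g⁻¹ = g • e.symm g := by
    intro g
    have h := hmul g g⁻¹
    rw [mul_inv_cancel, hone, inv_inv] at h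
    exact neg_eq_of_add_eq_zero_right h.symm
  have hxy := const_of_primitive (G := C.G) (X := X) (A := Additive (C.addGroup hnd))
    (fun g => -e.symm g⁻¹) (((Equiv.inv C.G).trans (e.symm.trans (Equiv.neg _))).bijective)
    (fun g h => by
      simp only [hinv]
      rw [hmul, smul_add, smul_smul, mul_inv_cancel_right, add_comm, smul_smul])
    (fun x => Additive.ofMul ⟨C.addGen hnd x, Subgroup.subset_closure ⟨x, rfl⟩⟩)
    (fun g x => by
      apply Subtype.ext
      exact (C.conj_addGen hnd g x).symm)
    (by
      rw [eq_top_iff]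
      rintro ⟨a, ha⟩ -
      induction ha using Subgroup.closure_induction with
      | mem a ha =>
        obtain ⟨x, rfl⟩ := ha
        exact AddSubgroup.subset_closure ⟨x, rfl⟩
      | one => exact zero_mem _
      | mul a b _ _ ha hb => exact add_mem ha hb
      | inv a _ ha => exact neg_mem ha) hX x y
  have h1 : C.addGen hnd x = C.addGen hnd y := congrArg Subtype.val hxy
  have h2 := congrArg Subtype.val (congrArg (fun f : Equiv.Perm C.G => f 1) h1)
  simpa [addGen_apply] using h2

end CycleSet

/-! ### The displacement group and cyclic quotients -/

namespace CycleSet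

variable {X Y : Type}

theorem perm_inv_apply (f : Equiv.Perm X) (x : X) : f⁻¹ (f x) = x := f.symm_apply_apply x

theorem perm_apply_inv (f : Equiv.Perm X) (x : X) : f (f⁻¹ x) = x := f.apply_symm_apply x

/-- `Dis(X)` is normalized by every `σ_{x₀}`. -/
theorem mem_conj_Dis (C : CycleSet X) (x₀ : X) {d : Equiv.Perm X} (hd : d ∈ C.Dis) :
    C.sigma x₀ * d * (C.sigma x₀)⁻¹ ∈ C.Dis := by
  -- `σ_y σ_x⁻¹ = σ_{y·x}⁻¹ σ_{x·y}`, and `τ σ_u⁻¹ σ_v τ⁻¹` is a product of displacements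
  have hmem : ∀ u v, C.sigma u * (C.sigma v)⁻¹ ∈ C.Dis := fun u v =>
    Subgroup.subset_closure ⟨u, v, rfl⟩
  have hle : C.Dis ≤ C.Dis.comap (MulAut.conj (C.sigma x₀)).toMonoidHom := by
    rw [Dis, Subgroup.closure_le]
    rintro _ ⟨y, x, rfl⟩
    have h1 : C.sigma y * (C.sigma x)⁻¹ =
        (C.sigma (C.op y x))⁻¹ * C.sigma (C.op x y) := by
      rw [mul_inv_eq_iff_eq_mul, mul_assoc, C.sigma_comm, inv_mul_cancel_left]
    rw [h1]
    change C.sigma x₀ * ((C.sigma (C.op y x))⁻¹ * C.sigma (C.op x y)) * (C.sigma x₀)⁻¹ ∈ C.Dis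
    convert mul_mem (hmem x₀ (C.op y x)) (hmem (C.op x y) x₀) using 1
    group
  exact hle hd

theorem conj_zpow_Dis [Finite X] (C : CycleSet X) (x₀ : X) (k : ℤ) {d : Equiv.Perm X}
    (hd : d ∈ C.Dis) : C.sigma x₀ ^ k * d * (C.sigma x₀ ^ k)⁻¹ ∈ C.Dis := by
  have hpow : ∀ n : ℕ, C.sigma x₀ ^ n * d * (C.sigma x₀ ^ n)⁻¹ ∈ C.Dis := by
    intro n
    induction n with
    | zero => simpa using hd
    | succ n ih =>
      convert C.mem_conj_Dis x₀ ih using 1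
      rw [pow_succ']; group
  have hfin : C.sigma x₀ ^ k ∈ Submonoid.powers (C.sigma x₀) :=
    (isOfFinOrder_of_finite (C.sigma x₀)).mem_powers_iff_mem_zpowers.2 ⟨k, rfl⟩
  obtain ⟨n, hn⟩ := hfin
  rw [← hn]; exact hpow n

/-- `G(X) = Dis(X)⟨σ_{x₀}⟩`. -/
theorem exists_dis_mul_zpow [Finite X] (C : CycleSet X) (x₀ : X) {g : Equiv.Perm X}
    (hg : g ∈ C.G) : ∃ d ∈ C.Dis, ∃ k : ℤ, g = d * C.sigma x₀ ^ k := by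
  induction hg using Subgroup.closure_induction with
  | mem g hg =>
    obtain ⟨x, rfl⟩ := hg
    exact ⟨C.sigma x * (C.sigma x₀)⁻¹, Subgroup.subset_closure ⟨x, x₀, rfl⟩, 1, by group⟩
  | one => exact ⟨1, one_mem _, 0, by simp⟩
  | mul g h _ _ ihg ihh =>
    obtain ⟨d, hd, k, rfl⟩ := ihg
    obtain ⟨e, he, l, rfl⟩ := ihh
    refine ⟨d * (C.sigma x₀ ^ k * e * (C.sigma x₀ ^ k)⁻¹), mul_mem hd (C.conj_zpow_Dis x₀ k he),
      k + l, ?_⟩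
    rw [zpow_add]; group
  | inv g _ ih =>
    obtain ⟨d, hd, k, rfl⟩ := ih
    refine ⟨C.sigma x₀ ^ (-k) * d⁻¹ * (C.sigma x₀ ^ (-k))⁻¹,
      C.conj_zpow_Dis x₀ (-k) (inv_mem hd), -k, ?_⟩
    group

/-- The exponents `k` for which `σ_{x₀}^k x₀` lies in the `Dis(X)`-orbit of `x₀`. -/
def orbitExponents [Finite X] (C : CycleSet X) (x₀ : X) : AddSubgroup ℤ where
  carrier := {k | ∃ d ∈ C.Dis, d ((C.sigma x₀ ^ k) x₀) = x₀}
  zero_mem' := ⟨1, one_mem _, by simp⟩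
  add_mem' := by
    rintro k l ⟨d, hd, hdk⟩ ⟨e, he, hel⟩
    refine ⟨d * (C.sigma x₀ ^ k * e * (C.sigma x₀ ^ k)⁻¹),
      mul_mem hd (C.conj_zpow_Dis x₀ k he), ?_⟩
    rw [zpow_add]
    simp only [Equiv.Perm.mul_apply, perm_inv_apply]
    rw [hel, hdk]
  neg_mem' := by
    rintro k ⟨d, hd, hdk⟩
    refine ⟨C.sigma x₀ ^ (-k) * d⁻¹ * (C.sigma x₀ ^ (-k))⁻¹,
      C.conj_zpow_Dis x₀ (-k) (inv_mem hd), ?_⟩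
    simp only [Equiv.Perm.mul_apply, perm_inv_apply]
    rw [← Equiv.Perm.eq_inv_iff_eq.2 hdk, zpow_neg, perm_inv_apply]

/-- If `Dis(X)` is intransitive, then `X` has a cyclic quotient of prime order: since
`G(X) = Dis(X)⟨σ_{x₀}⟩`, the `Dis(X)`-orbits are permuted cyclically, each `σ_x` acting on them as
the same cycle. -/
theorem exists_cyclic_quotient [Finite X] {C : CycleSet X} (hind : C.Indec) (x₀ : X)
    (h : ¬ SubgroupTransitive C.Dis) :
    ∃ p : ℕ, p.Prime ∧ ∃ f : X → ZMod p, Function.Surjective f ∧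
      ∀ x y, f (C.op x y) = f y + 1 := by
  have hrep : ∀ x, ∃ k : ℤ, ∃ d ∈ C.Dis, x = d ((C.sigma x₀ ^ k) x₀) := by
    intro x
    obtain ⟨g, hg, rfl⟩ := hind x₀ x
    obtain ⟨d, hd, k, rfl⟩ := C.exists_dis_mul_zpow x₀ hg
    exact ⟨k, d, hd, rfl⟩
  obtain ⟨m, hm⟩ := Int.subgroup_cyclic (C.orbitExponents x₀)
  have hmem : ∀ k : ℤ, k ∈ C.orbitExponents x₀ ↔ m ∣ k := fun k => by
    rw [hm, AddSubgroup.mem_closure_singleton]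
    simp only [smul_eq_mul]
    exact ⟨fun ⟨c, hc⟩ => ⟨c, by rw [← hc, mul_comm]⟩, fun ⟨c, hc⟩ => ⟨c, by rw [hc, mul_comm]⟩⟩
  -- `|m|` is the number of `Dis(X)`-orbits
  have hm1 : m.natAbs ≠ 1 := by
    intro h1
    apply h
    have hall : ∀ x, ∃ d ∈ C.Dis, d x = x₀ := by
      intro x
      obtain ⟨k, d, hd, rfl⟩ := hrep x
      have hk : k ∈ C.orbitExponents x₀ :=
        (hmem k).2 ((Int.isUnit_iff_natAbs_eq.2 h1).dvd)
      obtain ⟨e, he, hek⟩ := hk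
      exact ⟨e * d⁻¹, mul_mem he (inv_mem hd), by simpa using hek⟩
    intro a b
    obtain ⟨d, hd, hda⟩ := hall a
    obtain ⟨e, he, heb⟩ := hall b
    exact ⟨e⁻¹ * d, mul_mem (inv_mem he) hd, by
      rw [Equiv.Perm.mul_apply, hda, ← heb, perm_inv_apply]⟩
  have hp : m.natAbs.minFac.Prime := Nat.minFac_prime hm1
  set p := m.natAbs.minFac
  have hpm : (p : ℤ) ∣ m := Int.natCast_dvd.2 (Nat.minFac_dvd _)
  choose f d hd hf using hrep
  -- modulo `p`, the exponent `f x` does not depend on the choice of the representation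
  have huniq : ∀ (k : ℤ) (e : Equiv.Perm X), e ∈ C.Dis →
      (f (e ((C.sigma x₀ ^ k) x₀)) : ZMod p) = k := by
    intro k e he
    have h1 := hf (e ((C.sigma x₀ ^ k) x₀))
    set l := f (e ((C.sigma x₀ ^ k) x₀))
    set c := d (e ((C.sigma x₀ ^ k) x₀))
    have hc : c ∈ C.Dis := hd _
    have h2 : l - k ∈ C.orbitExponents x₀ := by
      refine ⟨C.sigma x₀ ^ (-k) * (e⁻¹ * c) * (C.sigma x₀ ^ (-k))⁻¹,
        C.conj_zpow_Dis x₀ (-k) (mul_mem (inv_mem he) hc), ?_⟩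
      rw [show l - k = -k + l by ring, zpow_add]
      simp only [Equiv.Perm.mul_apply, perm_inv_apply]
      rw [← h1, perm_inv_apply, zpow_neg, perm_inv_apply]
    have h3 : (p : ℤ) ∣ l - k := hpm.trans ((hmem _).1 h2)
    have h4 := (ZMod.intCast_zmod_eq_zero_iff_dvd (l - k) p).2 h3
    rw [Int.cast_sub, sub_eq_zero] at h4
    exact h4
  refine ⟨p, hp, fun x => (f x : ZMod p), ?_, ?_⟩
  · intro z
    obtain ⟨k, rfl⟩ := ZMod.intCast_surjective z
    exact ⟨_, huniq k 1 (one_mem _)⟩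
  · intro x y
    -- `σ_x = (σ_x σ_{x₀}⁻¹) σ_{x₀}` shifts the exponent of `y` by one
    have h1 : C.op x y = (C.sigma x * (C.sigma x₀)⁻¹ * (C.sigma x₀ ^ (1 : ℤ) * d y *
        (C.sigma x₀ ^ (1 : ℤ))⁻¹)) ((C.sigma x₀ ^ (f y + 1)) x₀) := by
      rw [add_comm (f y), zpow_add]
      simp only [Equiv.Perm.mul_apply, perm_inv_apply, zpow_one]
      rw [← hf y]; rfl
    change (f (C.op x y) : ZMod p) = (f y : ZMod p) + 1
    rw [h1]
    have h2 := huniq (f y + 1) _ (mul_mem (Subgroup.subset_closure ⟨x, x₀, rfl⟩)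
      (C.conj_zpow_Dis x₀ 1 (hd y)))
    rw [h2]; push_cast; rfl

/-- The cycle set `x·y = y + 1` on `ℤ/p`. -/
def cyclic (p : ℕ) : CycleSet (ZMod p) where
  op _ y := y + 1
  bij _ := (Equiv.addRight (1 : ZMod p)).bijective
  cyc _ _ _ := rfl

theorem cyclic_shift_mem (p : ℕ) (k : ℤ) :
    Equiv.addRight (k : ZMod p) ∈ (cyclic p).G := by
  have h1 : Equiv.addRight (k : ZMod p) = (cyclic p).sigma 0 ^ k := by
    have h0 : (cyclic p).sigma 0 = Equiv.addRight (1 : ZMod p) := by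
      ext1 z; rfl
    rw [h0]
    ext1 z
    change z + k = _
    induction k with
    | zero => simp
    | succ n ih =>
      rw [add_comm (n : ℤ) 1, zpow_add, Equiv.Perm.mul_apply, ← ih]
      change _ = z + _ + 1
      push_cast; ring
    | pred n ih =>
      rw [sub_eq_add_neg, add_comm _ (-1), zpow_add, Equiv.Perm.mul_apply, ← ih, zpow_neg_one,
        Equiv.Perm.eq_inv_iff_eq]
      change z + _ + 1 = _
      push_cast; ring
  rw [h1]
  exact zpow_mem ((cyclic p).sigma_mem_G 0) k

theorem cyclic_primitive {p : ℕ} (hp : p.Prime) : (cyclic p).Primitive := by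
  have := Fact.mk hp
  constructor
  · intro a b
    obtain ⟨k, hk⟩ := ZMod.intCast_surjective (b - a)
    refine ⟨_, cyclic_shift_mem p k, ?_⟩
    rw [Equiv.coe_addRight, hk]
    ring
  · intro s hs
    by_cases hsub : s.Subsingleton
    · exact Or.inl hsub
    right
    obtain ⟨a, ha, b, hb, hab⟩ := Set.not_subsingleton_iff.1 hsub
    -- translation by `c = b - a` preserves the block, and `c` generates `ℤ/p`
    obtain ⟨k, hk⟩ := ZMod.intCast_surjective (b - a)
    have hshift : (fun x => x + (b - a)) '' s = s := by
      have h1 := hs _ (cyclic_shift_mem p k)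
      rw [Equiv.coe_addRight, hk] at h1
      refine h1.resolve_right fun hd => ?_
      exact Set.disjoint_left.1 hd ⟨a, ha, by ring⟩ hb
    have hn : ∀ n : ℕ, a + n * (b - a) ∈ s := by
      intro n
      induction n with
      | zero => simpa using ha
      | succ n ih =>
        rw [← hshift]
        exact ⟨_, ih, by push_cast; ring⟩
    rw [Set.eq_univ_iff_forall]
    intro z
    have hba : b - a ≠ 0 := sub_ne_zero.2 (Ne.symm hab)
    have h2 := hn ((z - a) / (b - a)).val
    rw [ZMod.natCast_val, ZMod.cast_id, div_mul_cancel₀ _ hba, add_sub_cancel] at h2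
    exact h2

theorem hasFPL_of_two [Finite X] [Finite Y] {C : CycleSet X} {D : CycleSet Y} (f : X → Y)
    (hf : Function.Surjective f) (hfh : IsHom C D f) (hD : D.Primitive) (hY : 1 < Nat.card Y)
    (hXY : Nat.card Y < Nat.card X) : C.HasFPL := by
  let T : ℕ → Type := fun i => match i with
    | 0 => X
    | _ + 1 => Y
  have hT : ∀ i, Finite (T i) := fun i => match i with
    | 0 => ‹Finite X›
    | _ + 1 => ‹Finite Y›
  let CS : ∀ i, CycleSet (T i) := fun i => match i with
    | 0 => C
    | _ + 1 => D
  refine ⟨2, one_le_two, T, hT, CS, id, Function.bijective_id, fun _ _ => rfl, ?_, ?_, hD⟩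
  · intro i hi
    obtain rfl : i = 0 := by omega
    exact ⟨hXY, hY⟩
  · intro i hi
    obtain rfl : i = 0 := by omega
    exact ⟨f, hf, hfh⟩

/-- The cyclic quotient of prime order is primitive; the chain has length one or two according to
whether or not the quotient map is injective. -/
theorem hasFPL_of_not_transitive [Finite X] {C : CycleSet X} (hind : C.Indec)
    (hcard : 1 < Nat.card X) (h : ¬ SubgroupTransitive C.Dis) : C.HasFPL := by
  obtain ⟨x₀⟩ : Nonempty X := (Nat.card_pos_iff.1 (by omega)).1
  obtain ⟨p, hp, f, hf, hfh⟩ := exists_cyclic_quotient hind x₀ h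
  have := Fact.mk hp
  have hpc : Nat.card (ZMod p) = p := Nat.card_zmod p
  by_cases hbij : Function.Injective f
  · exact ⟨1, le_rfl, fun _ => ZMod p, fun _ => inferInstance, fun _ => cyclic p, f, ⟨hbij, hf⟩,
      hfh, fun i hi => by omega, fun i hi => by omega, cyclic_primitive hp⟩
  · refine hasFPL_of_two (D := cyclic p) f hf hfh (cyclic_primitive hp) (by rw [hpc]; exact hp.one_lt) ?_
    refine lt_of_le_of_ne (Nat.card_le_card_of_surjective f hf) fun he => hbij ?_
    exact ((Nat.bijective_iff_surjective_and_card f).2 ⟨hf, he.symm⟩).1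

/-- Each term of a chain of epimorphisms starting at (a copy of) `X` is a quotient of `X`. -/
theorem chain_epi {T : ℕ → Type} {CS : ∀ i, CycleSet (T i)} [Finite X] {C : CycleSet X}
    {e : X → T 0} (he : Function.Bijective e) (hhom : IsHom C (CS 0) e) {k : ℕ}
    (hp : ∀ i, i + 1 < k → ∃ p : T i → T (i + 1),
      Function.Surjective p ∧ IsHom (CS i) (CS (i + 1)) p) (i : ℕ) (hi : i < k) :
    ∃ f : X → T i, Function.Surjective f ∧ IsHom C (CS i) f := by
  induction i with
  | zero => exact ⟨e, he.2, hhom⟩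
  | succ i ih =>
    obtain ⟨f, hf, hfh⟩ := ih (by omega)
    obtain ⟨p, hps, hph⟩ := hp i hi
    exact ⟨p ∘ f, hps.comp hf, fun a b => by
      change p (f (C.op a b)) = _
      rw [hfh, hph]; rfl⟩

/-- The left multiplications of a primitive quotient coincide, so `Dis(X)` preserves the fibres of
the quotient map. -/
theorem not_transitive_of_hasFPL [Finite X] {C : CycleSet X} (hnd : C.Nondeg)
    (hcard : 1 < Nat.card X) (h : C.HasFPL) : ¬ SubgroupTransitive C.Dis := by
  obtain ⟨k, hk, T, hfin, CS, e, he, hhom, hc, hp, hprim⟩ := h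
  obtain ⟨f, hf, hfh⟩ := chain_epi he hhom hp (k - 1) (by omega)
  have hY : 1 < Nat.card (T (k - 1)) := by
    obtain rfl | hk2 := eq_or_lt_of_le hk
    · change 1 < Nat.card (T 0)
      rwa [← Nat.card_congr (Equiv.ofBijective e he)]
    · have h2 := (hc (k - 2) (by omega)).2
      rwa [show k - 2 + 1 = k - 1 by omega] at h2
  have := hfin (k - 1)
  -- squaring stays surjective on the image, hence bijective by finiteness
  have hndY : (CS (k - 1)).Nondeg := by
    refine Finite.surjective_iff_bijective.1 fun y => ?_
    obtain ⟨x, rfl⟩ := hf y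
    obtain ⟨z, rfl⟩ := hnd.2 x
    exact ⟨f z, (hfh z z).symm⟩
  have hsig := hprim.sigma_eq hndY hY
  have hD : ∀ d ∈ C.Dis, ∀ x, f (d x) = f x := by
    intro d hd
    induction hd using Subgroup.closure_induction with
    | mem d hd =>
      obtain ⟨u, v, rfl⟩ := hd
      intro x
      obtain ⟨w, rfl⟩ := (C.sigma v).surjective x
      rw [Equiv.Perm.mul_apply, perm_inv_apply]
      change f (C.op u w) = f (C.op v w)
      rw [hfh, hfh]
      exact congrArg (fun s : Equiv.Perm _ => s (f w)) (hsig (f u) (f v))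
    | one => exact fun _ => rfl
    | mul a b _ _ ha hb => exact fun x => (ha _).trans (hb x)
    | inv a _ ha =>
      intro x
      rw [← ha (a⁻¹ x), perm_apply_inv]
  intro htr
  have hYn : Nontrivial (T (k - 1)) := Finite.one_lt_card_iff_nontrivial.1 hY
  obtain ⟨y, z, hyz⟩ := exists_pair_ne (T (k - 1))
  obtain ⟨a, rfl⟩ := hf y
  obtain ⟨b, rfl⟩ := hf z
  obtain ⟨d, hd, rfl⟩ := htr a b
  exact hyz (hD d hd a).symm

end CycleSet

open CycleSet

theorem statement_2 {X : Type} [Finite X] (C : CycleSet X)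
    (hnd : C.Nondeg) (hind : C.Indec) (hcard : 1 < Nat.card X) :
    C.HasFPL ↔ ¬ SubgroupTransitive C.Dis :=
  ⟨not_transitive_of_hasFPL hnd hcard, hasFPL_of_not_transitive hind hcard⟩
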